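/- arXiv:1911.10634 — 3 statements merged into one kernel-verified Lean document; each statement's English description precedes it below -/
import Mathlib

section
/- Let p be a prime number with p ≡ 3 (mod 4) and p ≠ 3. Then the sum of Legendre symbols Σ_{n=1}^{(p−1)/2} (n/p) equals (2 − (2/p)) · h(−p), where h(−p) is the class number of the imaginary quadratic field ℚ(√−p). -/
/-!
Let `O` be the ring of integers of `ℚ(√-p)`, let `h` be its class number and `w` its number of
units, and let `χ` be the Legendre symbol modulo `p`. The number of ideals of norm `n` is
`r n = ∑ d ∣ n, χ d`, and the behaviour of `G t = ∑ r n exp (-n t)` as `t → 0⁺` is found in two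
ways. Sorting ideals by class turns `w G` into a sum of `h` theta series of binary quadratic forms,
each deprived of its constant term `1`, so Poisson summation gives `G t = c / t - h / w + o(1)`.
On the other hand `G` is a Lambert series, and `G t - 2 G (2 t) = ∑ χ n xⁿ / (1 + xⁿ)` with
`x = exp (-t)`; summing by parts, this tends to half of the mean of the partial sums of `χ`. The
combination `G t - 2 G (2 t)` removes the pole, whatever `c` is, and leaves `h / w`, whence
`p h = -∑ i χ i` because `w = 2`. Pairing `i` with `p - i`, and `2 i` with `p - 2 i`, then
expresses `∑ i χ i` through the half-range sum of `χ`.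
-/

open Filter Topology

section ConvexSequences

variable {f g : ℕ → ℝ} {N : ℕ}

theorem sum_range_mul_eq_add_sum_range_mul_sub (n : ℕ) :
    ∑ i ∈ Finset.range n, g i * f i =
      (∑ i ∈ Finset.range n, g i) * f n +
        ∑ i ∈ Finset.range n, (∑ j ∈ Finset.range (i + 1), g j) * (f i - f (i + 1)) := by
  induction n with
  | zero => simp
  | succ n ih => simp only [Finset.sum_range_succ, ih]; ring

theorem abs_sum_range_mul_le_of_antitone {C : ℝ} (hf : Antitone f) (hf0 : ∀ n, 0 ≤ f n)
    (hg : ∀ n, |∑ i ∈ Finset.range n, g i| ≤ C) (n : ℕ) :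
    |∑ i ∈ Finset.range n, g i * f i| ≤ C * f 0 := by
  have hdiff i : 0 ≤ f i - f (i + 1) := sub_nonneg.2 (hf i.le_succ)
  calc |∑ i ∈ Finset.range n, g i * f i|
      ≤ |∑ i ∈ Finset.range n, g i| * f n +
          ∑ i ∈ Finset.range n, |∑ j ∈ Finset.range (i + 1), g j| * (f i - f (i + 1)) := by
        rw [sum_range_mul_eq_add_sum_range_mul_sub]
        refine (abs_add_le _ _).trans (add_le_add ?_ ?_)
        · rw [abs_mul, abs_of_nonneg (hf0 n)]
        · refine (Finset.abs_sum_le_sum_abs _ _).trans_eq (Finset.sum_congr rfl fun i _ ↦ ?_)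
          rw [abs_mul, abs_of_nonneg (hdiff i)]
    _ ≤ C * f n + ∑ i ∈ Finset.range n, C * (f i - f (i + 1)) := by
        gcongr with i
        · exact hf0 n
        · exact hg n
        · exact hdiff i
        · exact hg (i + 1)
    _ = C * f 0 := by rw [← Finset.mul_sum, Finset.sum_range_sub']; ring

theorem periodic_sum_range (hg : Function.Periodic g N) (h0 : ∑ i ∈ Finset.range N, g i = 0) :
    Function.Periodic (fun n ↦ ∑ i ∈ Finset.range n, g i) N := fun n ↦ by
  have hshift i : g (N + i) = g i := by rw [add_comm]; exact hg i
  simp only [add_comm n N, Finset.sum_range_add, h0, zero_add, hshift]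

theorem exists_abs_sum_range_le_of_periodic (hg : Function.Periodic g N) (hN : 0 < N)
    (h0 : ∑ i ∈ Finset.range N, g i = 0) :
    ∃ C, ∀ n, |∑ i ∈ Finset.range n, g i| ≤ C := by
  refine ⟨∑ m ∈ Finset.range N, |∑ i ∈ Finset.range m, g i|, fun n ↦ ?_⟩
  rw [← (periodic_sum_range hg h0).map_mod_nat n]
  exact Finset.single_le_sum (f := fun m ↦ |∑ i ∈ Finset.range m, g i|) (fun _ _ ↦ abs_nonneg _)
    (Finset.mem_range.2 (Nat.mod_lt n hN))

-- Summation by parts, twice: `S` is the mean of the partial sums of `g`, so the deviations of these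
-- from `S` again have bounded partial sums.
theorem exists_abs_tsum_sub_mean_mul_le (hg : Function.Periodic g N) (hN : 0 < N)
    (h0 : ∑ i ∈ Finset.range N, g i = 0) {S : ℝ}
    (hS : N * S = ∑ i ∈ Finset.range N, ∑ j ∈ Finset.range (i + 1), g j) :
    ∃ C, ∀ f : ℕ → ℝ, Tendsto f atTop (𝓝 0) → Antitone (fun n ↦ f n - f (n + 1)) →
      ∀ {F : ℝ}, HasSum (fun n ↦ g n * f n) F → |F - S * f 0| ≤ C * (f 0 - f 1) := by
  obtain ⟨B, hB⟩ := exists_abs_sum_range_le_of_periodic hg hN h0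
  obtain ⟨C, hC⟩ := exists_abs_sum_range_le_of_periodic (N := N)
    (g := fun i ↦ ∑ j ∈ Finset.range (i + 1), g j - S)
    (fun i ↦ by simpa [add_right_comm] using periodic_sum_range hg h0 (i + 1))
    hN (by simp [Finset.sum_sub_distrib, ← hS])
  refine ⟨C, fun f hf hanti F hF ↦ ?_⟩
  have hdiff : Tendsto (fun n ↦ f n - f (n + 1)) atTop (𝓝 0) := by
    simpa using hf.sub (hf.comp (tendsto_add_atTop_nat 1))
  have hlim : Tendsto (fun n ↦ ∑ i ∈ Finset.range n, g i * f i -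
      (∑ i ∈ Finset.range n, g i) * f n - S * (f 0 - f n)) atTop (𝓝 (F - 0 - S * (f 0 - 0))) := by
    refine (hF.tendsto_sum_nat.sub ?_).sub ((hf.const_sub _).const_mul _)
    exact bdd_le_mul_tendsto_zero' B (Eventually.of_forall hB) hf
  refine le_of_tendsto (by simpa only [sub_zero] using hlim.abs) (Eventually.of_forall fun n ↦ ?_)
  have hparts : ∑ i ∈ Finset.range n, g i * f i - (∑ i ∈ Finset.range n, g i) * f n -
      S * (f 0 - f n) = ∑ i ∈ Finset.range n,
        (∑ j ∈ Finset.range (i + 1), g j - S) * (f i - f (i + 1)) := by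
    rw [sum_range_mul_eq_add_sum_range_mul_sub, ← Finset.sum_range_sub' f n, Finset.mul_sum]
    simp only [sub_mul _ S, Finset.sum_sub_distrib]
    ring
  rw [hparts]
  exact abs_sum_range_mul_le_of_antitone hanti
    (fun n ↦ hanti.le_of_tendsto hdiff n) hC n

end ConvexSequences

theorem antitone_pow_div_one_add_pow_sub {x : ℝ} (hx0 : 0 ≤ x) (hx1 : x ≤ 1) :
    Antitone fun n : ℕ ↦ x ^ n / (1 + x ^ n) - x ^ (n + 1) / (1 + x ^ (n + 1)) := by
  refine antitone_nat_of_succ_le fun n ↦ ?_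
  have hy0 : 0 ≤ x ^ n := pow_nonneg hx0 n
  have hy1 : x ^ n ≤ 1 := pow_le_one₀ hx0 hx1
  rw [pow_succ _ (n + 1), pow_succ]
  generalize x ^ n = y at *
  have hxy : 0 ≤ 1 - x * y := by nlinarith
  have hgap : (y / (1 + y) - y * x / (1 + y * x)) -
      (y * x / (1 + y * x) - y * x * x / (1 + y * x * x)) =
        y * (1 - x) ^ 2 * (1 - x * y) / ((1 + y) * (1 + y * x) * (1 + y * x * x)) := by
    field_simp
    ring
  rw [← sub_nonneg, hgap]
  positivity

section LambertSeries

variable {g : ℕ → ℝ} {x : ℝ}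

theorem summable_mul_pow_of_abs_le {B : ℝ} (hg : ∀ n, |g n| ≤ B) (hx0 : 0 ≤ x) (hx1 : x < 1) :
    Summable fun n ↦ g n * x ^ n :=
  .of_norm_bounded ((summable_geometric_of_lt_one hx0 hx1).mul_left B) fun n ↦ by
    rw [norm_mul, Real.norm_eq_abs, Real.norm_of_nonneg (pow_nonneg hx0 n)]
    gcongr
    exact hg n

theorem hasSum_sum_divisors_mul_pow {B : ℝ} (hg : ∀ n, |g n| ≤ B) (hx0 : 0 ≤ x) (hx1 : x < 1) :
    HasSum (fun n ↦ (∑ d ∈ n.divisors, g d) * x ^ n) (∑' n, g n * (x ^ n / (1 - x ^ n))) := by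
  have hsum : Summable fun c : ℕ+ × ℕ+ ↦ g c.1 * x ^ (c.1 * c.2 : ℕ) := by
    have h := (summable_prod_mul_pow 0 (r := x) (by rwa [Real.norm_of_nonneg hx0])).mul_left B
    refine .of_norm_bounded h fun c ↦ ?_
    rw [norm_mul, Real.norm_eq_abs, Real.norm_of_nonneg (pow_nonneg hx0 _), pow_zero, one_mul]
    gcongr
    exact hg _
  have hgeom (d : ℕ+) :
      HasSum (fun m : ℕ+ ↦ g d * x ^ (d * m : ℕ)) (g d * (x ^ (d : ℕ) / (1 - x ^ (d : ℕ)))) := by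
    refine HasSum.mul_left _ (hasSum_pnat_iff_hasSum_succ (f := fun m ↦ x ^ (d * m : ℕ)).2 ?_)
    have h := (hasSum_geometric_of_lt_one (pow_nonneg hx0 _)
      (pow_lt_one₀ hx0 hx1 d.ne_zero)).mul_left (x ^ (d : ℕ))
    simpa only [← pow_mul, ← pow_add, mul_add, mul_one, add_comm, div_eq_mul_inv] using h
  have hfst := hsum.hasSum.prod_fiberwise hgeom
  have hsigma := (sigmaAntidiagonalEquivProd.hasSum_iff.2 hsum.hasSum).sigma
    fun n ↦ hasSum_fintype _
  rw [hasSum_pnat_iff (f := fun d ↦ g d * (x ^ d / (1 - x ^ d)))] at hfst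
  rw [hfst.tsum_eq]
  have hfiber (n : ℕ+) : ∑ c : (n : ℕ).divisorsAntidiagonal, g c.1.1 * x ^ (c.1.1 * c.1.2) =
      (∑ d ∈ (n : ℕ).divisors, g d) * x ^ (n : ℕ) := by
    rw [Finset.sum_mul, ← Nat.sum_divisorsAntidiagonal (fun d _ ↦ g d * x ^ (n : ℕ)),
      Finset.sum_coe_sort _ fun c : ℕ × ℕ ↦ g c.1 * x ^ (c.1 * c.2)]
    exact Finset.sum_congr rfl fun c hc ↦ by rw [(Nat.mem_divisorsAntidiagonal.1 hc).1]
  simp only [Function.comp_apply, sigmaAntidiagonalEquivProd, divisorsAntidiagonalFactors,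
    Equiv.coe_fn_mk, PNat.mk_coe, hfiber] at hsigma
  rw [hasSum_pnat_iff (f := fun n ↦ (∑ d ∈ n.divisors, g d) * x ^ n)] at hsigma
  simpa using hsigma

theorem hasSum_mul_pow_div_one_add_pow {B : ℝ} (hg : ∀ n, |g n| ≤ B) (hg0 : g 0 = 0)
    (hx0 : 0 ≤ x) (hx1 : x < 1) :
    HasSum (fun n ↦ g n * (x ^ n / (1 + x ^ n)))
      (∑' n, (∑ d ∈ n.divisors, g d) * x ^ n -
        2 * ∑' n, (∑ d ∈ n.divisors, g d) * (x ^ 2) ^ n) := by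
  have hB : 0 ≤ B := (abs_nonneg _).trans (hg 0)
  have hlambert {y : ℝ} (hy0 : 0 ≤ y) (hy1 : y < 1) :
      HasSum (fun n ↦ g n * (y ^ n / (1 - y ^ n))) (∑' n, (∑ d ∈ n.divisors, g d) * y ^ n) := by
    rw [(hasSum_sum_divisors_mul_pow hg hy0 hy1).tsum_eq]
    refine Summable.hasSum ((summable_mul_pow_of_abs_le (g := fun n ↦ g n / (1 - y ^ n))
      (B := B / (1 - y)) (fun n ↦ ?_) hy0 hy1).congr fun n ↦ by ring)
    rcases eq_or_ne n 0 with rfl | hn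
    · simp only [hg0, zero_div, abs_zero]
      exact div_nonneg hB (sub_pos.2 hy1).le
    · have hle : y ^ n ≤ y := pow_le_of_le_one hy0 hy1.le hn
      rw [abs_div, abs_of_pos (by linarith : 0 < 1 - y ^ n)]
      gcongr
      exact hg n
  refine ((hlambert hx0 hx1).sub ((hlambert (sq_nonneg x) (by nlinarith)).mul_left 2)).congr_fun
    fun n ↦ ?_
  rcases eq_or_ne n 0 with rfl | hn
  · simp [hg0]
  · have hlt : x ^ n < 1 := pow_lt_one₀ hx0 hx1 hn
    have hpos : 0 ≤ x ^ n := pow_nonneg hx0 n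
    rw [← pow_mul, mul_comm 2 n, pow_mul]
    have hsub : 1 - x ^ n ≠ 0 := by linarith
    have hsub_sq : 1 - (x ^ n) ^ 2 ≠ 0 := by nlinarith
    have hadd : 1 + x ^ n ≠ 0 := by linarith
    field_simp
    ring

end LambertSeries

theorem tendsto_lambert_sub_two_mul_lambert_sq {g : ℕ → ℝ} {N : ℕ} (hg : Function.Periodic g N)
    (hN : 0 < N) (hg0 : g 0 = 0) (h0 : ∑ i ∈ Finset.range N, g i = 0) {S : ℝ}
    (hS : N * S = ∑ i ∈ Finset.range N, ∑ j ∈ Finset.range (i + 1), g j) :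
    Tendsto (fun x : ℝ ↦ ∑' n, (∑ d ∈ n.divisors, g d) * x ^ n -
      2 * ∑' n, (∑ d ∈ n.divisors, g d) * (x ^ 2) ^ n) (𝓝[<] 1) (𝓝 (S / 2)) := by
  obtain ⟨B, hB⟩ : ∃ B, ∀ n, |g n| ≤ B := by
    obtain ⟨B, hB⟩ := exists_abs_sum_range_le_of_periodic hg hN h0
    refine ⟨B + B, fun n ↦ ?_⟩
    rw [← Finset.sum_range_succ_sub_sum g]
    exact (abs_sub _ _).trans (add_le_add (hB _) (hB _))
  obtain ⟨C, hC⟩ := exists_abs_tsum_sub_mean_mul_le hg hN h0 hS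
  have hbound : Tendsto (fun x : ℝ ↦ C * (1 / 2 - x / (1 + x))) (𝓝[<] 1) (𝓝 0) := by
    have hcont : ContinuousAt (fun x : ℝ ↦ C * (1 / 2 - x / (1 + x))) 1 := by
      fun_prop (disch := norm_num)
    convert hcont.tendsto.mono_left nhdsWithin_le_nhds using 2
    norm_num
  refine tendsto_iff_dist_tendsto_zero.2 (squeeze_zero' (.of_forall fun _ ↦ dist_nonneg) ?_ hbound)
  filter_upwards [Ioo_mem_nhdsLT one_pos] with x hx
  have hlim : Tendsto (fun n ↦ x ^ n / (1 + x ^ n)) atTop (𝓝 0) := by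
    have h := tendsto_pow_atTop_nhds_zero_of_lt_one hx.1.le hx.2
    simpa [Pi.div_def] using h.div (h.const_add 1) (by norm_num)
  have h := hC _ hlim (antitone_pow_div_one_add_pow_sub hx.1.le hx.2.le)
    (hasSum_mul_pow_div_one_add_pow hB hg0 hx.1.le hx.2)
  norm_num at h
  rwa [Real.dist_eq, div_eq_mul_inv, ← one_div]

theorem tendsto_const_mul_nhdsGT_zero {b : ℝ} (hb : 0 < b) :
    Tendsto (fun t ↦ b * t) (𝓝[>] 0) (𝓝[>] 0) :=
  tendsto_iff_comap.2 (comap_mulLeft_nhdsGT_zero hb).ge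

section GaussianSums

open HurwitzZeta Real

-- After Poisson summation, the error term is a series of cosines, dominated termwise by the one at
-- `a = 0`.
theorem abs_evenKernel_sub_one_div_sqrt_le (a : ℝ) {t : ℝ} (ht : 0 < t) :
    |evenKernel a t - 1 / √t| ≤ evenKernel 0 t - 1 / √t := by
  have ht' : 0 < 1 / t := one_div_pos.2 ht
  have hcos : |cosKernel a (1 / t) - 1| ≤ cosKernel 0 (1 / t) - 1 := by
    have h := hasSum_nat_cosKernel₀ a ht'
    have h0 := hasSum_nat_cosKernel₀ 0 ht'
    rw [QuotientAddGroup.mk_zero] at h0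
    rw [← h.tsum_eq, ← Real.norm_eq_abs]
    refine tsum_of_norm_bounded h0 fun n ↦ ?_
    rw [norm_mul, norm_mul, Real.norm_of_nonneg (exp_pos _).le, Real.norm_ofNat, mul_zero, zero_mul,
      cos_zero]
    gcongr
    exact abs_cos_le_one _
  rw [evenKernel_functional_equation, evenKernel_functional_equation, ← sqrt_eq_rpow,
    ← mul_sub_one, ← mul_sub_one, abs_mul, abs_of_pos (by positivity)]
  gcongr

theorem tendsto_evenKernel_zero_sub_mul_one_div_sqrt :
    Tendsto (fun t ↦ (evenKernel 0 t - 1 / √t) * (1 / √t)) (𝓝[>] 0) (𝓝 0) := by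
  obtain ⟨r, hr, hdecay⟩ := isBigO_atTop_cosKernel_sub 0
  have hlim := (hdecay.trans_isLittleO
    (isLittleO_exp_neg_mul_rpow_atTop hr (-1))).tendsto_div_nhds_zero
  refine (hlim.comp tendsto_inv_nhdsGT_zero).congr' ?_
  filter_upwards [self_mem_nhdsWithin] with t ht
  rw [evenKernel_functional_equation, ← sqrt_eq_rpow, ← mul_sub_one, Function.comp_apply,
    rpow_neg_one, inv_inv, mul_right_comm, one_div_mul_one_div, mul_self_sqrt (le_of_lt ht),
    one_div, mul_comm, div_eq_mul_inv]

theorem tendsto_evenKernel_zero_sub_one_div_sqrt :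
    Tendsto (fun t ↦ evenKernel 0 t - 1 / √t) (𝓝[>] 0) (𝓝 0) := by
  have hsqrt : Tendsto (fun t ↦ √t) (𝓝[>] 0) (𝓝 0) := by
    simpa using continuous_sqrt.continuousWithinAt (s := Set.Ioi 0) (x := 0) |>.tendsto
  have h := tendsto_evenKernel_zero_sub_mul_one_div_sqrt.mul hsqrt
  rw [zero_mul] at h
  refine h.congr' ?_
  filter_upwards [self_mem_nhdsWithin] with t ht
  rw [mul_assoc, one_div_mul_cancel (sqrt_pos.2 ht).ne', mul_one]

theorem evenKernel_le_evenKernel_zero (a : ℝ) {t : ℝ} (ht : 0 < t) :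
    evenKernel a t ≤ evenKernel 0 t := by
  linarith [le_abs_self _ |>.trans (abs_evenKernel_sub_one_div_sqrt_le a ht)]

theorem hasSum_exp_neg_pi_sq_mul {t : ℝ} (ht : 0 < t) :
    HasSum (fun m : ℤ ↦ rexp (-π * m ^ 2 * t)) (evenKernel 0 t) := by
  simpa using hasSum_int_evenKernel 0 ht

theorem summable_exp_mul_exp (u : ℝ) {c d : ℝ} (hc : 0 < c) (hd : 0 < d) :
    Summable fun v : ℤ × ℤ ↦ rexp (-π * v.1 ^ 2 * d) * rexp (-π * (v.2 + u * v.1) ^ 2 * c) := by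
  have hinner (m : ℤ) := (hasSum_int_evenKernel (u * m) hc).mul_left (rexp (-π * m ^ 2 * d))
  refine (summable_prod_of_nonneg fun v ↦ by positivity).2 ⟨fun m ↦ (hinner m).summable, ?_⟩
  simp only [(hinner _).tsum_eq]
  refine .of_norm_bounded ((hasSum_exp_neg_pi_sq_mul hd).mul_right (evenKernel 0 c)).summable
    fun m ↦ ?_
  rw [norm_mul, Real.norm_of_nonneg (exp_pos _).le,
    Real.norm_of_nonneg ((hasSum_int_evenKernel (u * m) hc).nonneg fun _ ↦ (exp_pos _).le)]
  gcongr
  exact evenKernel_le_evenKernel_zero _ hc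

theorem abs_tsum_exp_mul_exp_sub_le (u : ℝ) {c d : ℝ} (hc : 0 < c) (hd : 0 < d) :
    |∑' v : ℤ × ℤ, rexp (-π * v.1 ^ 2 * d) * rexp (-π * (v.2 + u * v.1) ^ 2 * c) -
        evenKernel 0 d * (1 / √c)| ≤
      evenKernel 0 d * (evenKernel 0 c - 1 / √c) := by
  have hinner (m : ℤ) := (hasSum_int_evenKernel (u * m) hc).mul_left (rexp (-π * m ^ 2 * d))
  have houter := hasSum_exp_neg_pi_sq_mul hd
  have hdiff := ((summable_exp_mul_exp u hc hd).hasSum.prod_fiberwise hinner).sub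
    (houter.mul_right (1 / √c))
  rw [← hdiff.tsum_eq, ← Real.norm_eq_abs]
  refine tsum_of_norm_bounded (houter.mul_right _) fun m ↦ ?_
  rw [← mul_sub, norm_mul, Real.norm_of_nonneg (exp_pos _).le, Real.norm_eq_abs]
  gcongr
  exact abs_evenKernel_sub_one_div_sqrt_le _ hc

theorem tendsto_tsum_exp_mul_exp_sub (u : ℝ) {c d : ℝ} (hc : 0 < c) (hd : 0 < d) :
    Tendsto (fun t : ℝ ↦ ∑' v : ℤ × ℤ,
        rexp (-π * v.1 ^ 2 * (d * t)) * rexp (-π * (v.2 + u * v.1) ^ 2 * (c * t)) -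
          1 / √(c * d) / t) (𝓝[>] 0) (𝓝 0) := by
  have hη {b : ℝ} (hb : 0 < b) :=
    tendsto_evenKernel_zero_sub_one_div_sqrt.comp (tendsto_const_mul_nhdsGT_zero hb)
  have hηk {b : ℝ} (hb : 0 < b) :=
    tendsto_evenKernel_zero_sub_mul_one_div_sqrt.comp (tendsto_const_mul_nhdsGT_zero hb)
  have hbound := (((hηk hc).const_mul (√c / √d)).add ((hη hd).mul (hη hc))).add
    ((hηk hd).const_mul (√d / √c))
  simp only [mul_zero, add_zero, Function.comp_apply] at hbound
  refine squeeze_zero_norm' ?_ hbound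
  filter_upwards [self_mem_nhdsWithin] with t ht
  have ht : 0 < t := ht
  have hmain := abs_tsum_exp_mul_exp_sub_le u (mul_pos hc ht) (mul_pos hd ht)
  have hpos : 0 ≤ evenKernel 0 (d * t) - 1 / √(d * t) :=
    (abs_nonneg _).trans (abs_evenKernel_sub_one_div_sqrt_le 0 (mul_pos hd ht))
  set S := ∑' v : ℤ × ℤ, rexp (-π * v.1 ^ 2 * (d * t)) * rexp (-π * (v.2 + u * v.1) ^ 2 * (c * t))
  rw [Real.norm_eq_abs]
  generalize evenKernel 0 (c * t) = θc at *
  generalize evenKernel 0 (d * t) = θd at *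
  have hk : 1 / √(c * d) / t = 1 / √(d * t) * (1 / √(c * t)) := by
    rw [sqrt_mul hc.le, sqrt_mul hc.le, sqrt_mul hd.le]
    nth_rw 1 [← mul_self_sqrt ht.le]
    field_simp
  calc |S - 1 / √(c * d) / t|
      ≤ |S - θd * (1 / √(c * t))| + |(θd - 1 / √(d * t)) * (1 / √(c * t))| := by
        rw [hk]
        refine (abs_add_le _ _).trans_eq' ?_
        ring_nf
    _ ≤ θd * (θc - 1 / √(c * t)) + (θd - 1 / √(d * t)) * (1 / √(c * t)) := by
        rw [abs_of_nonneg (mul_nonneg hpos (by positivity))]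
        gcongr
    _ = _ := by
        have : √t ≠ 0 := (sqrt_pos.2 ht).ne'
        have : √c ≠ 0 := (sqrt_pos.2 hc).ne'
        have : √d ≠ 0 := (sqrt_pos.2 hd).ne'
        rw [sqrt_mul hc.le, sqrt_mul hd.le]
        field_simp
        ring

theorem exp_neg_binary_form_eq {A B C : ℝ} (hC : C ≠ 0) (t x y : ℝ) :
    rexp (-t * (A * x ^ 2 + B * x * y + C * y ^ 2)) =
      rexp (-π * x ^ 2 * ((4 * A * C - B ^ 2) / (4 * C * π) * t)) *
        rexp (-π * (y + B / (2 * C) * x) ^ 2 * (C / π * t)) := by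
  rw [← exp_add]
  congr 1
  field_simp
  ring

theorem summable_exp_neg_binary_form {A B C t : ℝ} (hC : 0 < C) (hdisc : 0 < 4 * A * C - B ^ 2)
    (ht : 0 < t) :
    Summable fun v : ℤ × ℤ ↦ rexp (-t * (A * v.1 ^ 2 + B * v.1 * v.2 + C * v.2 ^ 2)) := by
  simp only [exp_neg_binary_form_eq hC.ne']
  exact summable_exp_mul_exp _ (by positivity) (by positivity)

theorem tendsto_tsum_exp_neg_binary_form_sub {A B C : ℝ} (hC : 0 < C)
    (hdisc : 0 < 4 * A * C - B ^ 2) :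
    Tendsto (fun t : ℝ ↦ ∑' v : ℤ × ℤ, rexp (-t * (A * v.1 ^ 2 + B * v.1 * v.2 + C * v.2 ^ 2)) -
      2 * π / √(4 * A * C - B ^ 2) / t) (𝓝[>] 0) (𝓝 0) := by
  have hdet : C / π * ((4 * A * C - B ^ 2) / (4 * C * π)) = (4 * A * C - B ^ 2) / (2 * π) ^ 2 := by
    field_simp
    ring
  have h := tendsto_tsum_exp_mul_exp_sub (B / (2 * C)) (c := C / π)
    (d := (4 * A * C - B ^ 2) / (4 * C * π)) (by positivity) (by positivity)
  rw [hdet, sqrt_div hdisc.le, sqrt_sq (by positivity), one_div_div] at h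
  simpa only [exp_neg_binary_form_eq hC.ne'] using h

end GaussianSums

section IdealCount

open Ideal Module

section AbsNorm

variable {R : Type*} [CommRing R] [IsDedekindDomain R] [Module.Free ℤ R] {m n q : ℕ}
  {I J : Ideal R}

theorem isCoprime_of_coprime_absNorm (h : (absNorm I).Coprime (absNorm J)) : IsCoprime I J := by
  rw [isCoprime_iff_sup_eq, ← absNorm_eq_one_iff]
  exact Nat.eq_one_of_dvd_coprimes h (absNorm_dvd_absNorm_of_le le_sup_left)
    (absNorm_dvd_absNorm_of_le le_sup_right)

theorem eq_of_dvd_of_absNorm_eq (hJ : absNorm J ≠ 0) (hdvd : I ∣ J) (h : absNorm I = absNorm J) :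
    I = J := by
  obtain ⟨B, rfl⟩ := hdvd
  have hB : absNorm B = 1 := by
    rw [map_mul] at h hJ
    exact (Nat.mul_eq_left (left_ne_zero_of_mul hJ)).1 h.symm
  rw [absNorm_eq_one_iff.1 hB, mul_top]

variable [Module.Finite ℤ R]

theorem absNorm_span_natCast_of_finrank_eq_two (hrank : finrank ℤ R = 2) (n : ℕ) :
    absNorm (span {(n : R)}) = n ^ 2 := by
  rw [absNorm_span_natCast, hrank]

theorem exists_mul_eq_of_absNorm_eq_mul (hcop : m.Coprime n) (hI : absNorm I = m * n) :
    ∃ A B : Ideal R, A * B = I ∧ absNorm A = m ∧ absNorm B = n := by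
  have hdvd : I ∣ span {(m : R)} * span {(n : R)} := by
    rw [span_singleton_mul_span_singleton, ← Nat.cast_mul, ← hI, dvd_iff_le]
    exact span_singleton_absNorm_le I
  obtain ⟨A, B, hA, hB, rfl⟩ := exists_dvd_and_dvd_of_dvd_mul hdvd
  have hAm : absNorm A ∣ m ^ finrank ℤ R := by
    simpa only [absNorm_span_natCast] using map_dvd absNorm hA
  have hBn : absNorm B ∣ n ^ finrank ℤ R := by
    simpa only [absNorm_span_natCast] using map_dvd absNorm hB
  rw [map_mul] at hI
  have hAdvd : absNorm A ∣ m :=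
    ((hcop.pow_left _).coprime_dvd_left hAm).dvd_of_dvd_mul_right (Dvd.intro _ hI)
  have hBdvd : absNorm B ∣ n :=
    ((hcop.symm.pow_left _).coprime_dvd_left hBn).dvd_of_dvd_mul_left (Dvd.intro_left _ hI)
  exact ⟨A, B, rfl,
    hAdvd.antisymm ((hcop.coprime_dvd_right hBdvd).dvd_of_dvd_mul_right (Dvd.intro _ hI.symm)),
    hBdvd.antisymm
      ((hcop.symm.coprime_dvd_right hAdvd).dvd_of_dvd_mul_left (Dvd.intro_left _ hI.symm))⟩

theorem exists_absNorm_eq_and_le (hrank : finrank ℤ R = 2) (hq : q.Prime)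
    (hI : absNorm I = q ^ n) (hn : n ≠ 0) (hle : ¬ I ≤ span {(q : R)}) :
    ∃ P, absNorm P = q ∧ I ≤ P := by
  obtain ⟨P, hmax, hunder, hdvd⟩ :=
    exists_isMaximal_dvd_of_dvd_absNorm' hq I (hI ▸ dvd_pow_self q hn)
  have hqP : span {(q : R)} ≤ P := by
    have h : (q : ℤ) ∈ P.under ℤ := hunder ▸ mem_span_singleton_self _
    simpa [span_singleton_le_iff_mem] using h
  have hPq : absNorm P ∣ q ^ 2 := by
    rw [← absNorm_span_natCast_of_finrank_eq_two hrank]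
    exact absNorm_dvd_absNorm_of_le hqP
  obtain ⟨i, hi, hPi⟩ := (Nat.dvd_prime_pow hq).1 hPq
  interval_cases i
  · exact absurd (absNorm_eq_one_iff.1 (by simpa using hPi)) hmax.ne_top
  · exact ⟨P, by simpa using hPi, dvd_iff_le.1 hdvd⟩
  · have hP : P = span {(q : R)} := eq_of_dvd_of_absNorm_eq
      (by simp [absNorm_span_natCast_of_finrank_eq_two hrank, hq.ne_zero]) (dvd_iff_le.2 hqP)
      (by rw [hPi, absNorm_span_natCast_of_finrank_eq_two hrank])
    exact absurd (hP ▸ dvd_iff_le.1 hdvd) hle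

theorem le_span_natCast_of_le_of_le (hrank : finrank ℤ R = 2) (hq : q.Prime) {P Q : Ideal R}
    (hP : absNorm P = q) (hQ : absNorm Q = q) (hPQ : P ≠ Q) (hIP : I ≤ P) (hIQ : I ≤ Q) :
    I ≤ span {(q : R)} := by
  have hmax {P : Ideal R} (hP : absNorm P = q) : P.IsMaximal :=
    (isPrime_of_irreducible_absNorm (hP ▸ hq)).isMaximal
      fun h ↦ hq.ne_zero (by rw [← hP, h, absNorm_bot])
  have hcop : IsCoprime P Q :=
    isCoprime_iff_sup_eq.2 ((hmax hP).coprime_of_ne (hmax hQ) hPQ)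
  have hinf : P * Q = P ⊓ Q := mul_eq_inf_of_coprime (isCoprime_iff_sup_eq.1 hcop)
  have hspan : P * Q = span {(q : R)} := by
    refine eq_of_dvd_of_absNorm_eq
      (by simp [absNorm_span_natCast_of_finrank_eq_two hrank, hq.ne_zero]) (dvd_iff_le.2 ?_) ?_
    · rw [hinf]
      exact le_inf (hP ▸ span_singleton_absNorm_le P) (hQ ▸ span_singleton_absNorm_le Q)
    · rw [map_mul, hP, hQ, absNorm_span_natCast_of_finrank_eq_two hrank, sq]
  exact hspan ▸ hinf ▸ le_inf hIP hIQ

end AbsNorm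

variable (R : Type*) [CommRing R] [IsDedekindDomain R] [Module.Free ℤ R] [Module.Finite ℤ R]
  [CharZero R]

/-- The finite set of ideals of absolute norm `n`. -/
noncomputable def idealsOfNorm (n : ℕ) : Finset (Ideal R) :=
  (finite_setOfPred_absNorm_eq (S := R) n).toFinset

/-- The number of nonzero ideals of absolute norm `n`, i.e. the coefficients of the Dedekind zeta
function of `R`. The value at `0` is set to `0`, which discards the zero ideal. -/
noncomputable def idealCount : ArithmeticFunction ℕ :=
  ⟨fun n ↦ if n = 0 then 0 else (idealsOfNorm R n).card, if_pos rfl⟩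

variable {R} {m n q : ℕ} {I J : Ideal R}

theorem mem_idealsOfNorm : I ∈ idealsOfNorm R n ↔ absNorm I = n := by
  simp [idealsOfNorm]

theorem idealCount_apply (hn : n ≠ 0) : idealCount R n = (idealsOfNorm R n).card := if_neg hn

theorem idealCount_one : idealCount R 1 = 1 := by
  rw [idealCount_apply one_ne_zero, Finset.card_eq_one]
  exact ⟨⊤, by ext I; simp [mem_idealsOfNorm]⟩

open Classical in
theorem card_filter_le_idealsOfNorm_mul (hm : m ≠ 0) (hn : n ≠ 0) (hJ : absNorm J = m) :
    ((idealsOfNorm R (m * n)).filter (· ≤ J)).card = idealCount R n := by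
  have hJ0 : J ≠ 0 := fun h ↦ hm (by rw [← hJ, h, map_zero])
  rw [idealCount_apply hn,
    ← Finset.card_image_of_injective (idealsOfNorm R n) (mul_right_injective₀ hJ0)]
  congr 1
  ext I
  simp only [Finset.mem_filter, Finset.mem_image, mem_idealsOfNorm, ← dvd_iff_le]
  constructor
  · rintro ⟨hI, B, rfl⟩
    exact ⟨B, Nat.eq_of_mul_eq_mul_left hm.bot_lt (by rw [← hI, map_mul, hJ]), rfl⟩
  · rintro ⟨B, hB, rfl⟩
    exact ⟨by rw [map_mul, hJ, hB], dvd_mul_right J B⟩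

open Classical in
theorem sum_card_filter_ge_idealsOfNorm (hm : m ≠ 0) (hn : n ≠ 0) :
    ∑ I ∈ idealsOfNorm R (m * n), ((idealsOfNorm R m).filter (I ≤ ·)).card =
      idealCount R m * idealCount R n := by
  refine (Finset.sum_card_bipartiteAbove_eq_sum_card_bipartiteBelow (· ≤ ·)).trans ?_
  rw [idealCount_apply hm, ← smul_eq_mul (idealsOfNorm R m).card, ← Finset.sum_const]
  exact Finset.sum_congr rfl fun J hJ ↦
    card_filter_le_idealsOfNorm_mul hm hn (mem_idealsOfNorm.1 hJ)

open Classical in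
theorem isMultiplicative_idealCount : (idealCount R).IsMultiplicative := by
  refine ArithmeticFunction.IsMultiplicative.iff_ne_zero.2 ⟨idealCount_one, ?_⟩
  intro m n hm hn hcop
  rw [idealCount_apply (mul_ne_zero hm hn), ← sum_card_filter_ge_idealsOfNorm hm hn,
    Finset.card_eq_sum_ones]
  refine Finset.sum_congr rfl fun I hI ↦ (Finset.card_eq_one.2 ?_).symm
  obtain ⟨A, B, rfl, hA, hB⟩ := exists_mul_eq_of_absNorm_eq_mul hcop (mem_idealsOfNorm.1 hI)
  refine ⟨A, Finset.eq_singleton_iff_unique_mem.2 ⟨?_, fun C hC ↦ ?_⟩⟩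
  · exact Finset.mem_filter.2 ⟨mem_idealsOfNorm.2 hA, mul_le_left⟩
  · obtain ⟨hCm, hle⟩ := Finset.mem_filter.1 hC
    rw [mem_idealsOfNorm] at hCm
    have hCB : IsCoprime C B := isCoprime_of_coprime_absNorm (by rwa [hCm, hB])
    exact eq_of_dvd_of_absNorm_eq (hA ▸ hm) (hCB.dvd_of_dvd_mul_right (dvd_iff_le.2 hle))
      (hCm.trans hA.symm)

open Classical in
theorem card_filter_ge_idealsOfNorm_prime (hrank : finrank ℤ R = 2) (hq : q.Prime)
    (hI : absNorm I = q ^ n) (hn : n ≠ 0) :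
    (((idealsOfNorm R q).filter (I ≤ ·)).card : ℤ) =
      1 + (idealCount R q - 1) * if I ≤ span {(q : R)} then 1 else 0 := by
  split_ifs with hle
  · rw [Finset.filter_true_of_mem, idealCount_apply hq.ne_zero]
    · ring
    · intro P hP
      exact hle.trans (mem_idealsOfNorm.1 hP ▸ span_singleton_absNorm_le P)
  · obtain ⟨P, hP, hIP⟩ := exists_absNorm_eq_and_le hrank hq hI hn hle
    have hsingle : (idealsOfNorm R q).filter (I ≤ ·) = {P} := by
      refine Finset.eq_singleton_iff_unique_mem.2 ⟨?_, fun Q hQ ↦ ?_⟩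
      · exact Finset.mem_filter.2 ⟨mem_idealsOfNorm.2 hP, hIP⟩
      · obtain ⟨hQ, hIQ⟩ := Finset.mem_filter.1 hQ
        by_contra hne
        exact hle (le_span_natCast_of_le_of_le hrank hq (mem_idealsOfNorm.1 hQ) hP hne hIQ hIP)
    simp [hsingle]

-- Count the pairs `I ≤ P` with `P` of norm `q` and `I` of norm `q ^ (k + 2)`: every `I` lies in
-- exactly one such `P`, except that it lies in all of them if `q` divides `I`.
open Classical in
theorem idealCount_mul_idealCount_prime_pow (hrank : finrank ℤ R = 2) (hq : q.Prime) (k : ℕ) :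
    (idealCount R q * idealCount R (q ^ (k + 1)) : ℤ) =
      idealCount R (q ^ (k + 2)) + (idealCount R q - 1) * idealCount R (q ^ k) := by
  have hq0 (i : ℕ) : q ^ i ≠ 0 := pow_ne_zero i hq.ne_zero
  have h := card_filter_le_idealsOfNorm_mul (hq0 2) (hq0 k)
    (absNorm_span_natCast_of_finrank_eq_two (R := R) hrank q)
  rw [← pow_add, add_comm 2] at h
  rw [← Nat.cast_mul, ← sum_card_filter_ge_idealsOfNorm hq.ne_zero (hq0 _), ← pow_succ', ← h,
    Nat.cast_sum, Finset.sum_congr rfl fun I hI ↦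
      card_filter_ge_idealsOfNorm_prime hrank hq (mem_idealsOfNorm.1 hI) (by lia),
    Finset.sum_add_distrib, ← Finset.mul_sum, Finset.sum_boole, idealCount_apply (hq0 _)]
  simp

theorem idealCount_prime_pow (hrank : finrank ℤ R = 2) (hq : q.Prime) (k : ℕ) :
    (idealCount R (q ^ k) : ℤ) = ∑ i ∈ Finset.range (k + 1), (idealCount R q - 1 : ℤ) ^ i := by
  induction k using Nat.twoStepInduction with
  | zero => simp [idealCount_one]
  | one => simp [Finset.sum_range_succ]
  | more k ih₀ ih₁ =>
    have h := idealCount_mul_idealCount_prime_pow (R := R) hrank hq k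
    rw [ih₀, ih₁, Finset.sum_range_succ _ (k + 1)] at h
    rw [Finset.sum_range_succ _ (k + 2), Finset.sum_range_succ _ (k + 1)]
    linear_combination -h

theorem idealCount_eq_sum_divisors (hrank : finrank ℤ R = 2) (χ : ℕ →*₀ ℤ)
    (hχ : ∀ q : ℕ, q.Prime → (idealCount R q : ℤ) = 1 + χ q) (n : ℕ) :
    (idealCount R n : ℤ) = ∑ d ∈ n.divisors, χ d := by
  let f : ArithmeticFunction ℤ := ⟨χ, map_zero χ⟩
  have hf : f.IsMultiplicative := ⟨map_one χ, fun _ ↦ map_mul χ _ _⟩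
  have hmul : (f * ArithmeticFunction.zeta).IsMultiplicative :=
    hf.mul ArithmeticFunction.isMultiplicative_zeta.natCast
  have heq : ((idealCount R : ArithmeticFunction ℕ) : ArithmeticFunction ℤ) =
      f * ArithmeticFunction.zeta :=
    (isMultiplicative_idealCount.natCast.eq_iff_eq_on_prime_powers _ _ hmul).2 fun q k hq ↦ by
      rw [ArithmeticFunction.coe_mul_zeta_apply, Nat.divisors_prime_pow hq, Finset.sum_map]
      simp [idealCount_prime_pow hrank hq, hχ q hq, f]
  rw [← ArithmeticFunction.natCoe_apply, heq, ArithmeticFunction.coe_mul_zeta_apply]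
  rfl

end IdealCount

section PrimeIdeals

open Ideal Module

section AlgHom

variable {R : Type*} [CommRing R]

theorem injective_ker_algHom_zmod (q : ℕ) :
    Function.Injective fun f : R →ₐ[ℤ] ZMod q ↦ RingHom.ker f := by
  intro f g (hker : RingHom.ker f = RingHom.ker g)
  ext x
  obtain ⟨n, hn⟩ := ZMod.intCast_surjective (f x)
  have hmem : x - n ∈ RingHom.ker f := by simp [RingHom.mem_ker, hn]
  rw [hker, RingHom.mem_ker, map_sub, map_intCast, hn, sub_eq_zero] at hmem
  exact hmem.symm

variable {q : ℕ} [IsDedekindDomain R] [Module.Free ℤ R]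

theorem absNorm_ker_algHom_zmod (f : R →ₐ[ℤ] ZMod q) : absNorm (RingHom.ker f) = q := by
  rw [absNorm_apply, Submodule.cardQuot_apply]
  exact (Nat.card_congr (RingHom.quotientKerEquivOfSurjective
    (ZMod.ringHom_surjective (f : R →+* ZMod q))).toEquiv).trans (Nat.card_zmod q)

theorem exists_ker_algHom_zmod_eq (hq : q.Prime) {I : Ideal R} (hI : absNorm I = q) :
    ∃ f : R →ₐ[ℤ] ZMod q, RingHom.ker f = I := by
  rw [absNorm_apply, Submodule.cardQuot_apply] at hI
  have : Finite (R ⧸ I) := Nat.finite_of_card_ne_zero (hI ▸ hq.ne_zero)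
  have := Fintype.ofFinite (R ⧸ I)
  let φ := (ZMod.ringEquivOfPrime (R ⧸ I) hq (by rw [← hI, Nat.card_eq_fintype_card])).symm
  refine ⟨((φ : R ⧸ I →+* ZMod q).comp (Ideal.Quotient.mk I)).toIntAlgHom, ?_⟩
  ext x
  simp [RingHom.mem_ker, Ideal.Quotient.eq_zero_iff_mem]

variable [Module.Finite ℤ R] [CharZero R]

theorem idealCount_prime_eq_card_algHom (hq : q.Prime) :
    idealCount R q = Nat.card (R →ₐ[ℤ] ZMod q) := by
  rw [idealCount_apply hq.ne_zero, ← Nat.card_eq_finsetCard]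
  let kerMap (f : R →ₐ[ℤ] ZMod q) : idealsOfNorm R q :=
    ⟨RingHom.ker f, mem_idealsOfNorm.2 (absNorm_ker_algHom_zmod f)⟩
  refine (Nat.card_congr (Equiv.ofBijective kerMap ⟨fun f g h ↦ ?_, ?_⟩)).symm
  · exact injective_ker_algHom_zmod q (Subtype.ext_iff.1 h)
  · rintro ⟨I, hI⟩
    obtain ⟨f, hf⟩ := exists_ker_algHom_zmod_eq hq (mem_idealsOfNorm.1 hI)
    exact ⟨f, Subtype.ext hf⟩

end AlgHom

theorem idealCount_quadraticAlgebra_prime {a b : ℤ} [IsDedekindDomain (QuadraticAlgebra ℤ a b)]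
    {q : ℕ} (hq : q.Prime) :
    idealCount (QuadraticAlgebra ℤ a b) q =
      Nat.card {u : ZMod q // u * u = a • 1 + b • u} := by
  rw [idealCount_prime_eq_card_algHom hq]
  exact Nat.card_congr QuadraticAlgebra.lift.symm

theorem card_quadratic_roots_zmod_two (a : ℤ) :
    Nat.card {u : ZMod 2 // u * u = a • 1 + (1 : ℤ) • u} = if Even a then 2 else 0 := by
  simp only [zsmul_one, one_smul]
  split_ifs with ha
  · rw [(ZMod.intCast_eq_zero_iff_even).2 ha, Nat.card_eq_fintype_card]
    decide
  · rw [(ZMod.intCast_eq_one_iff_odd).2 (Int.not_even_iff_odd.1 ha), Nat.card_eq_fintype_card]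
    decide

theorem card_quadratic_roots_zmod (a b : ℤ) {q : ℕ} [Fact q.Prime] (hq : q ≠ 2) :
    (Nat.card {u : ZMod q // u * u = a • 1 + b • u} : ℤ) = legendreSym q (b ^ 2 + 4 * a) + 1 := by
  have h2 : (2 : ZMod q) ≠ 0 := Ring.two_ne_zero (by rwa [ZMod.ringChar_zmod_n])
  rw [← legendreSym.card_sqrts q hq, Set.toFinset_card, ← Nat.card_eq_fintype_card]
  congr 1
  refine Nat.card_congr (((Equiv.mulLeft₀ 2 h2).trans (Equiv.subRight (b : ZMod q))).subtypeEquiv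
    fun u ↦ ?_)
  have hsq : (2 * u - b) ^ 2 = b ^ 2 + 4 * a ↔ 2 ^ 2 * (u * u - (a + b * u)) = 0 := by
    rw [← sub_eq_zero]
    ring_nf
  simp [hsq, h2, sub_eq_zero]

theorem card_quadratic_roots_eq_one_add_legendreSym {p q : ℕ} [Fact p.Prime] [Fact q.Prime]
    (ha : (p : ℤ) = -4 * a - 1) :
    (Nat.card {u : ZMod q // u * u = a • 1 + (1 : ℤ) • u} : ℤ) = 1 + legendreSym p q := by
  have hp2 : p ≠ 2 := by lia
  rcases eq_or_ne q 2 with rfl | hq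
  · rw [card_quadratic_roots_zmod_two, Nat.cast_two, legendreSym.at_two hp2,
      ZMod.χ₈_nat_eq_if_mod_eight]
    grind
  · have hq1 : q % 2 = 1 := (Nat.Prime.mod_two_eq_one_iff_ne_two Fact.out).2 hq
    have hsign : Even (q / 2 + p / 2 * (q / 2)) := by
      rw [← one_add_mul]
      exact Even.mul_right (by grind) _
    rw [card_quadratic_roots_zmod a 1 hq, show 1 ^ 2 + 4 * a = -1 * p by lia, legendreSym.mul,
      legendreSym.at_neg_one hq, ZMod.χ₄_eq_neg_one_pow hq1,
      legendreSym.quadratic_reciprocity' hp2 hq, ← mul_assoc, ← pow_add, hsign.neg_one_pow,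
      one_mul, add_comm]

end PrimeIdeals

section IdealTheta

open Ideal Real
open scoped nonZeroDivisors

section ClassDecomposition

variable {R : Type*} [CommRing R] [IsDedekindDomain R]

theorem exists_equiv_prod_units_of_mk0_eq_inv {C : ClassGroup R} {J : (Ideal R)⁰}
    (hJ : ClassGroup.mk0 J = C⁻¹) :
    ∃ φ : {I : (Ideal R)⁰ // ClassGroup.mk0 I = C} × Rˣ ≃ {α : (J : Ideal R) // α ≠ 0},
      ∀ v, span {(φ v : R)} = (v.1 : Ideal R) * J := by
  have hprincipal (I : {I : (Ideal R)⁰ // ClassGroup.mk0 I = C}) :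
      ∃ x ≠ (0 : R), (I : Ideal R) * J = span {x} :=
    ClassGroup.mk0_eq_mk0_inv_iff.1 (by rw [I.2, hJ, inv_inv])
  choose gen hgen0 hgen using hprincipal
  have hspan (I) (u : Rˣ) : span {gen I * u} = (I : Ideal R) * J := by
    rw [hgen, span_singleton_mul_right_unit u.isUnit]
  let φ (v : {I : (Ideal R)⁰ // ClassGroup.mk0 I = C} × Rˣ) : {α : (J : Ideal R) // α ≠ 0} :=
    ⟨⟨gen v.1 * v.2, mul_le_right (I := (v.1 : Ideal R))
      (hspan v.1 v.2 ▸ mem_span_singleton_self _)⟩,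
      fun h ↦ mul_ne_zero (hgen0 v.1) v.2.ne_zero (congrArg Subtype.val h)⟩
  refine ⟨Equiv.ofBijective φ ⟨?_, ?_⟩, fun v ↦ hspan v.1 v.2⟩
  · rintro ⟨I, u⟩ ⟨I', u'⟩ h
    have hval : gen I * u = gen I' * u' := congrArg (fun α ↦ (α.1 : R)) h
    have hmul : (I : Ideal R) * J = I' * J := by rw [← hspan I u, hval, hspan]
    obtain rfl : I = I' :=
      Subtype.ext (Subtype.ext (mul_right_cancel₀ (nonZeroDivisors.coe_ne_zero J) hmul))
    rw [Units.ext (mul_left_cancel₀ (hgen0 I) hval)]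
  · rintro ⟨⟨α, hαJ⟩, hα⟩
    have hα0 : α ≠ 0 := fun h ↦ hα (Subtype.ext h)
    obtain ⟨I, hI⟩ : (J : Ideal R) ∣ span {α} :=
      dvd_iff_le.2 ((span_singleton_le_iff_mem _).2 hαJ)
    have hI0 : I ≠ 0 := by
      rintro rfl
      exact hα0 (span_singleton_eq_bot.1 (by rw [hI, mul_zero, zero_eq_bot]))
    let I' : (Ideal R)⁰ := ⟨I, mem_nonZeroDivisors_of_ne_zero hI0⟩
    have hC : ClassGroup.mk0 I' = C := by
      rw [← inv_inv C, ← hJ]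
      exact ClassGroup.mk0_eq_mk0_inv_iff.2 ⟨α, hα0, by rw [hI, mul_comm]⟩
    obtain ⟨u, hu⟩ : Associated (gen ⟨I', hC⟩) α := by
      rw [← span_singleton_eq_span_singleton, ← hgen, hI, mul_comm]
    exact ⟨(⟨I', hC⟩, u), Subtype.ext (Subtype.ext hu)⟩

variable [Module.Free ℤ R]

/-- The theta series `∑ exp (-t N(α) / N(J))` of an ideal `J`, over all `α ∈ J`. -/
noncomputable def idealTheta (J : Ideal R) (t : ℝ) : ℝ :=
  ∑' α : J, rexp (-t * (absNorm (span {(α : R)}) / absNorm J))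

variable [Module.Finite ℤ R] [CharZero R]

theorem hasSum_exp_neg_absNorm_of_mk0_eq [Finite Rˣ] {C : ClassGroup R} {J : (Ideal R)⁰}
    (hJ : ClassGroup.mk0 J = C⁻¹) {t : ℝ} (hsum : Summable fun α : (J : Ideal R) ↦
      rexp (-t * (absNorm (span {(α : R)}) / absNorm (J : Ideal R)))) :
    HasSum (fun I : {I : (Ideal R)⁰ // ClassGroup.mk0 I = C} ↦ rexp (-t * absNorm (I : Ideal R)))
      ((idealTheta (J : Ideal R) t - 1) / Nat.card Rˣ) := by
  have := Fintype.ofFinite Rˣ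
  have hw : (Nat.card Rˣ : ℝ) ≠ 0 := Nat.cast_ne_zero.2 Nat.card_pos.ne'
  have hJ0 : (absNorm (J : Ideal R) : ℝ) ≠ 0 :=
    Nat.cast_ne_zero.2 (absNorm_ne_zero_of_nonZeroDivisors J)
  obtain ⟨φ, hφ⟩ := exists_equiv_prod_units_of_mk0_eq_inv hJ
  let f (α : (J : Ideal R)) : ℝ := rexp (-t * (absNorm (span {(α : R)}) / absNorm (J : Ideal R)))
  have hne : HasSum (fun α : {α : (J : Ideal R) // α ≠ 0} ↦ f α)
      (idealTheta (J : Ideal R) t - 1) := by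
    have hzero : HasSum (f ∘ (↑) : ({0} : Set (J : Ideal R)) → ℝ) 1 := by
      simpa [f] using hasSum_unique (f ∘ (↑) : ({0} : Set (J : Ideal R)) → ℝ)
    exact hzero.hasSum_iff_compl.1 hsum.hasSum
  have hterm (v : {I : (Ideal R)⁰ // ClassGroup.mk0 I = C} × Rˣ) :
      (absNorm (span {(φ v : R)}) / absNorm (J : Ideal R) : ℝ) = absNorm (v.1 : Ideal R) := by
    rw [hφ, map_mul, Nat.cast_mul, mul_div_cancel_right₀ _ hJ0]
  have hprod := (φ.hasSum_iff.2 hne).prod_fiberwise fun I ↦ hasSum_fintype _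
  simp only [Function.comp_apply, f, hterm, Finset.sum_const, Finset.card_univ, nsmul_eq_mul,
    ← Nat.card_eq_fintype_card] at hprod
  simpa only [mul_div_cancel_left₀ _ hw] using hprod.div_const (Nat.card Rˣ : ℝ)

theorem hasSum_exp_neg_absNorm [Finite Rˣ] [Fintype (ClassGroup R)] {J : ClassGroup R → (Ideal R)⁰}
    (hJ : ∀ C, ClassGroup.mk0 (J C) = C⁻¹) {t : ℝ}
    (hsum : ∀ C, Summable fun α : (J C : Ideal R) ↦
      rexp (-t * (absNorm (span {(α : R)}) / absNorm (J C : Ideal R)))) :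
    HasSum (fun I : (Ideal R)⁰ ↦ rexp (-t * absNorm (I : Ideal R)))
      (∑ C, (idealTheta (J C : Ideal R) t - 1) / Nat.card Rˣ) := by
  have hfib C := hasSum_exp_neg_absNorm_of_mk0_eq (hJ C) (hsum C)
  refine (Equiv.sigmaFiberEquiv ClassGroup.mk0).hasSum_iff.1
    ((hasSum_fintype _).sigma_of_hasSum hfib ?_)
  exact (summable_sigma_of_nonneg fun _ ↦ (exp_pos _).le).2
    ⟨fun C ↦ (hfib C).summable, Summable.of_finite⟩

theorem hasSum_exp_neg_absNorm_of_absNorm_eq (t : ℝ) (n : ℕ) :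
    HasSum (fun I : {I : (Ideal R)⁰ // absNorm (I : Ideal R) = n} ↦
      rexp (-t * absNorm (I : Ideal R))) (idealCount R n * rexp (-t) ^ n) := by
  rcases eq_or_ne n 0 with rfl | hn
  · have : IsEmpty {I : (Ideal R)⁰ // absNorm (I : Ideal R) = 0} :=
      ⟨fun I ↦ absNorm_ne_zero_of_nonZeroDivisors I.1 I.2⟩
    simp [hasSum_empty]
  · have hI0 (I : idealsOfNorm R n) : (I : Ideal R) ∈ (Ideal R)⁰ :=
      absNorm_ne_zero_iff_mem_nonZeroDivisors.1 (by rwa [mem_idealsOfNorm.1 I.2])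
    let φ : idealsOfNorm R n ≃ {I : (Ideal R)⁰ // absNorm (I : Ideal R) = n} :=
      { toFun I := ⟨⟨I, hI0 I⟩, mem_idealsOfNorm.1 I.2⟩
        invFun I := ⟨I, mem_idealsOfNorm.2 I.2⟩ }
    have hsum : ∑ I ∈ idealsOfNorm R n, rexp (-t * absNorm I) =
        idealCount R n * rexp (-t) ^ n := by
      rw [idealCount_apply hn, ← nsmul_eq_mul, ← Finset.sum_const, ← exp_nat_mul]
      refine Finset.sum_congr rfl fun I hI ↦ ?_
      rw [mem_idealsOfNorm.1 hI, mul_comm]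
    exact φ.hasSum_iff.1 (hsum ▸ (idealsOfNorm R n).hasSum fun I ↦ rexp (-t * absNorm I))

theorem tsum_exp_neg_absNorm_eq_tsum_idealCount {t : ℝ}
    (hsum : Summable fun I : (Ideal R)⁰ ↦ rexp (-t * absNorm (I : Ideal R))) :
    ∑' I : (Ideal R)⁰, rexp (-t * absNorm (I : Ideal R)) =
      ∑' n : ℕ, (idealCount R n : ℝ) * rexp (-t) ^ n :=
  (((Equiv.sigmaFiberEquiv _).hasSum_iff.2 hsum.hasSum).sigma
    (hasSum_exp_neg_absNorm_of_absNorm_eq t)).tsum_eq.symm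

end ClassDecomposition

section QuadraticAlgebra

theorem norm_smul_add_smul {R : Type*} [CommRing R] {a b : R} (α β : QuadraticAlgebra R a b)
    (x y : R) : (x • α + y • β).norm =
      α.norm * x ^ 2 + QuadraticAlgebra.trace (α * star β) * x * y + β.norm * y ^ 2 := by
  simp only [QuadraticAlgebra.norm_def, QuadraticAlgebra.trace_def, QuadraticAlgebra.re_add,
    QuadraticAlgebra.im_add, QuadraticAlgebra.re_smul, QuadraticAlgebra.im_smul,
    QuadraticAlgebra.re_mul, QuadraticAlgebra.im_mul, QuadraticAlgebra.re_star,
    QuadraticAlgebra.im_star, smul_eq_mul]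
  ring

theorem four_mul_norm_mul_norm_sub_trace_sq {R : Type*} [CommRing R] {a b : R}
    (α β : QuadraticAlgebra R a b) :
    4 * α.norm * β.norm - QuadraticAlgebra.trace (α * star β) ^ 2 =
      -(b ^ 2 + 4 * a) * (α.re * β.im - α.im * β.re) ^ 2 := by
  simp only [QuadraticAlgebra.norm_def, QuadraticAlgebra.trace_def, QuadraticAlgebra.re_mul,
    QuadraticAlgebra.im_mul, QuadraticAlgebra.re_star, QuadraticAlgebra.im_star]
  ring

variable {a b : ℤ}

theorem norm_pos_of_discrim_neg (hD : b ^ 2 + 4 * a < 0) {z : QuadraticAlgebra ℤ a b}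
    (hz : z ≠ 0) : 0 < z.norm := by
  have h : 4 * z.norm = (2 * z.re + b * z.im) ^ 2 + -(b ^ 2 + 4 * a) * z.im ^ 2 := by
    rw [QuadraticAlgebra.norm_def]
    ring
  rcases eq_or_ne z.im 0 with him | him
  · have hre : z.re ≠ 0 := fun hre ↦ hz (QuadraticAlgebra.ext hre him)
    rw [him] at h
    linarith [pow_pos (abs_pos.2 hre) 2, sq_abs z.re]
  · nlinarith [mul_pos (neg_pos.2 hD) (sq_pos_of_ne_zero him), sq_nonneg (2 * z.re + b * z.im)]

theorem det_ne_zero_of_linearIndependent {α β : QuadraticAlgebra ℤ a b}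
    (h : LinearIndependent ℤ ![α, β]) : α.re * β.im - α.im * β.re ≠ 0 := by
  intro hdet
  rw [LinearIndependent.pair_iff] at h
  obtain ⟨-, hαim⟩ := h β.im (-α.im) (by ext <;> simp <;> linarith)
  obtain ⟨-, hαre⟩ := h β.re (-α.re) (by ext <;> simp <;> linarith)
  have hα : α = 0 := QuadraticAlgebra.ext (neg_eq_zero.1 hαre) (neg_eq_zero.1 hαim)
  exact one_ne_zero (h 1 0 (by simp [hα])).1

variable [IsDedekindDomain (QuadraticAlgebra ℤ a b)]

theorem absNorm_span_singleton_quadraticAlgebra (z : QuadraticAlgebra ℤ a b) :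
    absNorm (span {z}) = z.norm.natAbs := by
  rw [absNorm_span_singleton, Algebra.norm_apply, ← QuadraticAlgebra.det_toLinearMap_eq_norm]
  rfl

theorem exists_equiv_absNorm_eq_binary_form (hD : b ^ 2 + 4 * a < 0)
    {J : Ideal (QuadraticAlgebra ℤ a b)} (hJ : J ≠ ⊥) :
    ∃ A B C : ℤ, 0 < C ∧ 0 < 4 * A * C - B ^ 2 ∧ ∃ φ : ℤ × ℤ ≃ J,
      ∀ v, (absNorm (span {(φ v : QuadraticAlgebra ℤ a b)}) : ℤ) =
        A * v.1 ^ 2 + B * v.1 * v.2 + C * v.2 ^ 2 := by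
  let e := selfBasis (QuadraticAlgebra.basis a b) J hJ
  let α : QuadraticAlgebra ℤ a b := e 0
  let β : QuadraticAlgebra ℤ a b := e 1
  have hli : LinearIndependent ℤ ![α, β] := by
    have hcomp : ![α, β] = J.subtype.restrictScalars ℤ ∘ e := by
      ext i : 1
      fin_cases i <;> rfl
    rw [hcomp]
    exact e.linearIndependent.map' _ (LinearMap.ker_eq_bot.2 Subtype.val_injective)
  let φ : ℤ × ℤ ≃ J := (finTwoArrowEquiv ℤ).symm.trans e.equivFun.symm.toEquiv
  have hφ (v) : (φ v : QuadraticAlgebra ℤ a b) = v.1 • α + v.2 • β := by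
    simp [φ, α, β]
  refine ⟨α.norm, QuadraticAlgebra.trace (α * star β), β.norm,
    norm_pos_of_discrim_neg hD (hli.ne_zero 1), ?_, φ, fun v ↦ ?_⟩
  · rw [four_mul_norm_mul_norm_sub_trace_sq]
    exact mul_pos (neg_pos.2 hD) (sq_pos_of_ne_zero (det_ne_zero_of_linearIndependent hli))
  · rw [absNorm_span_singleton_quadraticAlgebra, Int.natAbs_of_nonneg, hφ, norm_smul_add_smul]
    rcases eq_or_ne (φ v : QuadraticAlgebra ℤ a b) 0 with h | h
    · rw [h, QuadraticAlgebra.norm_zero]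
    · exact (norm_pos_of_discrim_neg hD h).le

theorem exists_equiv_absNorm_div_absNorm_eq_binary_form (hD : b ^ 2 + 4 * a < 0)
    {J : Ideal (QuadraticAlgebra ℤ a b)} (hJ : J ≠ ⊥) :
    ∃ A B C : ℝ, 0 < C ∧ 0 < 4 * A * C - B ^ 2 ∧ ∃ φ : ℤ × ℤ ≃ J,
      ∀ v, (absNorm (span {(φ v : QuadraticAlgebra ℤ a b)}) / absNorm J : ℝ) =
        A * v.1 ^ 2 + B * v.1 * v.2 + C * v.2 ^ 2 := by
  obtain ⟨A, B, C, hC, hdisc, φ, hφ⟩ := exists_equiv_absNorm_eq_binary_form hD hJ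
  have hN : 0 < (absNorm J : ℝ) :=
    Nat.cast_pos.2 (Nat.pos_of_ne_zero (absNorm_eq_zero_iff.not.2 hJ))
  generalize (absNorm J : ℝ) = N at hN ⊢
  refine ⟨A / N, B / N, C / N, div_pos (Int.cast_pos.2 hC) hN, ?_, φ, fun v ↦ ?_⟩
  · have : (0 : ℝ) < 4 * A * C - B ^ 2 := by exact_mod_cast hdisc
    rw [show 4 * (A / N) * (C / N) - (B / N : ℝ) ^ 2 = (4 * A * C - B ^ 2) / N ^ 2 by ring]
    positivity
  · rw [← Int.cast_natCast (absNorm _), hφ]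
    push_cast
    ring

theorem summable_exp_neg_absNorm_div (hD : b ^ 2 + 4 * a < 0)
    {J : Ideal (QuadraticAlgebra ℤ a b)} (hJ : J ≠ ⊥) {t : ℝ} (ht : 0 < t) :
    Summable fun α : J ↦
      rexp (-t * (absNorm (span {(α : QuadraticAlgebra ℤ a b)}) / absNorm J)) := by
  obtain ⟨A, B, C, hC, hdisc, φ, hφ⟩ := exists_equiv_absNorm_div_absNorm_eq_binary_form hD hJ
  refine φ.summable_iff.1 ?_
  simpa only [Function.comp_def, hφ] using summable_exp_neg_binary_form hC hdisc ht

theorem exists_tendsto_idealTheta_sub_div (hD : b ^ 2 + 4 * a < 0)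
    {J : Ideal (QuadraticAlgebra ℤ a b)} (hJ : J ≠ ⊥) :
    ∃ c, Tendsto (fun t ↦ idealTheta J t - c / t) (𝓝[>] 0) (𝓝 0) := by
  obtain ⟨A, B, C, hC, hdisc, φ, hφ⟩ := exists_equiv_absNorm_div_absNorm_eq_binary_form hD hJ
  have htheta (t : ℝ) : idealTheta J t =
      ∑' v : ℤ × ℤ, rexp (-t * (A * v.1 ^ 2 + B * v.1 * v.2 + C * v.2 ^ 2)) := by
    rw [idealTheta, ← φ.tsum_eq]
    simp only [hφ]
  simp only [htheta]
  exact ⟨_, tendsto_tsum_exp_neg_binary_form_sub hC hdisc⟩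

variable [Finite (QuadraticAlgebra ℤ a b)ˣ]

theorem exists_hasSum_exp_neg_absNorm [Fintype (ClassGroup (QuadraticAlgebra ℤ a b))]
    (hD : b ^ 2 + 4 * a < 0) :
    ∃ J : ClassGroup (QuadraticAlgebra ℤ a b) → (Ideal (QuadraticAlgebra ℤ a b))⁰, ∀ t > 0,
      HasSum (fun I : (Ideal (QuadraticAlgebra ℤ a b))⁰ ↦
          rexp (-t * absNorm (I : Ideal (QuadraticAlgebra ℤ a b))))
        (∑ C, (idealTheta (J C : Ideal (QuadraticAlgebra ℤ a b)) t - 1) /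
          Nat.card (QuadraticAlgebra ℤ a b)ˣ) := by
  choose J hJ using fun C : ClassGroup (QuadraticAlgebra ℤ a b) ↦ ClassGroup.mk0_surjective C⁻¹
  exact ⟨J, fun t ht ↦ hasSum_exp_neg_absNorm hJ fun C ↦
    summable_exp_neg_absNorm_div hD (nonZeroDivisors.coe_ne_zero (J C)) ht⟩

variable [Finite (ClassGroup (QuadraticAlgebra ℤ a b))]

theorem exists_tendsto_tsum_idealCount_sub_div (hD : b ^ 2 + 4 * a < 0) :
    ∃ c, Tendsto
      (fun t ↦ ∑' n, (idealCount (QuadraticAlgebra ℤ a b) n : ℝ) * rexp (-t) ^ n - c / t) (𝓝[>] 0)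
      (𝓝 (-(Nat.card (ClassGroup (QuadraticAlgebra ℤ a b)) /
        Nat.card (QuadraticAlgebra ℤ a b)ˣ))) := by
  have := Fintype.ofFinite (ClassGroup (QuadraticAlgebra ℤ a b))
  obtain ⟨J, hJ⟩ := exists_hasSum_exp_neg_absNorm hD
  choose c hc using fun C ↦
    exists_tendsto_idealTheta_sub_div hD (nonZeroDivisors.coe_ne_zero (J C))
  refine ⟨∑ C, c C / Nat.card (QuadraticAlgebra ℤ a b)ˣ, ?_⟩
  have hlim := tendsto_finsetSum Finset.univ fun C _ ↦
    ((hc C).sub_const 1).div_const (Nat.card (QuadraticAlgebra ℤ a b)ˣ : ℝ)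
  rw [Finset.sum_const, Finset.card_univ, ← Nat.card_eq_fintype_card, nsmul_eq_mul, zero_sub,
    mul_div_assoc', mul_neg_one, neg_div] at hlim
  refine hlim.congr' ?_
  filter_upwards [self_mem_nhdsWithin] with t ht
  rw [← tsum_exp_neg_absNorm_eq_tsum_idealCount (hJ t ht).summable, (hJ t ht).tsum_eq,
    Finset.sum_div, ← Finset.sum_sub_distrib]
  exact Finset.sum_congr rfl fun C _ ↦ by ring

theorem tendsto_tsum_idealCount_sub_two_mul_tsum_idealCount (hD : b ^ 2 + 4 * a < 0) :
    Tendsto (fun t ↦ ∑' n, (idealCount (QuadraticAlgebra ℤ a b) n : ℝ) * rexp (-t) ^ n -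
        2 * ∑' n, (idealCount (QuadraticAlgebra ℤ a b) n : ℝ) * (rexp (-t) ^ 2) ^ n) (𝓝[>] 0)
      (𝓝 (Nat.card (ClassGroup (QuadraticAlgebra ℤ a b)) /
        Nat.card (QuadraticAlgebra ℤ a b)ˣ)) := by
  obtain ⟨c, hc⟩ := exists_tendsto_tsum_idealCount_sub_div hD
  have h := hc.sub ((hc.comp (tendsto_const_mul_nhdsGT_zero two_pos)).const_mul 2)
  rw [show ∀ r : ℝ, -r - 2 * -r = r from fun r ↦ by ring] at h
  refine h.congr fun t ↦ ?_
  rw [← exp_nat_mul, Function.comp_apply, Nat.cast_ofNat, mul_neg, mul_sub,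
    mul_div_assoc', mul_div_mul_left _ _ two_ne_zero]
  ring

end QuadraticAlgebra

end IdealTheta

section ClassNumberFormula

variable {a b : ℤ} [IsDedekindDomain (QuadraticAlgebra ℤ a b)]
  [Finite (ClassGroup (QuadraticAlgebra ℤ a b))] [Finite (QuadraticAlgebra ℤ a b)ˣ]

theorem two_mul_card_classGroup_eq_card_units_mul_sum (hD : b ^ 2 + 4 * a < 0) {χ : ℕ →*₀ ℤ}
    (hχ : ∀ q, q.Prime → (idealCount (QuadraticAlgebra ℤ a b) q : ℤ) = 1 + χ q) {N : ℕ}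
    (hper : Function.Periodic χ N) (hN : 0 < N) (h0 : ∑ i ∈ Finset.range N, χ i = 0) :
    (2 * N * Nat.card (ClassGroup (QuadraticAlgebra ℤ a b)) : ℤ) =
      Nat.card (QuadraticAlgebra ℤ a b)ˣ *
        ∑ i ∈ Finset.range N, ∑ j ∈ Finset.range (i + 1), χ j := by
  have hN' : (N : ℝ) ≠ 0 := Nat.cast_ne_zero.2 hN.ne'
  have hw : (Nat.card (QuadraticAlgebra ℤ a b)ˣ : ℝ) ≠ 0 := Nat.cast_ne_zero.2 Nat.card_pos.ne'
  have hcount (n : ℕ) :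
      (idealCount (QuadraticAlgebra ℤ a b) n : ℝ) = ∑ d ∈ n.divisors, (χ d : ℝ) := by
    have hrank : Module.finrank ℤ (QuadraticAlgebra ℤ a b) = 2 :=
      QuadraticAlgebra.finrank_eq_two a b
    exact_mod_cast idealCount_eq_sum_divisors hrank χ hχ n
  have htheta := tendsto_tsum_idealCount_sub_two_mul_tsum_idealCount hD
  simp only [hcount] at htheta
  have hexp : Tendsto (fun t ↦ Real.exp (-t)) (𝓝[>] 0) (𝓝[<] 1) := by
    refine tendsto_nhdsWithin_iff.2 ⟨?_, ?_⟩
    · have : ContinuousAt (fun t ↦ Real.exp (-t)) 0 := by fun_prop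
      simpa using this.tendsto.mono_left nhdsWithin_le_nhds
    · filter_upwards [self_mem_nhdsWithin] with t ht using Real.exp_lt_one_iff.2 (neg_lt_zero.2 ht)
  have hlambert := (tendsto_lambert_sub_two_mul_lambert_sq (g := fun n ↦ (χ n : ℝ))
    (fun n ↦ congrArg _ (hper n)) hN (by simp) (by exact_mod_cast h0)
    (mul_div_cancel₀ _ hN')).comp hexp
  have h := tendsto_nhds_unique htheta hlambert
  field_simp at h
  apply Int.cast_injective (α := ℝ)
  push_cast
  linear_combination h

end ClassNumberFormula

theorem isDedekindDomain_of_ringEquiv {R S : Type*} [CommRing R] [CommRing S] [IsDedekindDomain R]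
    (e : R ≃+* S) : IsDedekindDomain S :=
  have : IsDomain S := e.symm.toMulEquiv.isDomain
  have := isNoetherianRing_of_ringEquiv R e
  have := Ring.DimensionLEOne.of_ringEquiv e.symm
  have := IsIntegrallyClosed.of_equiv e
  { toIsDomain := ‹_›, toIsDedekindRing := { } }

section RingOfIntegers

open NumberField

theorem exists_int_eq_of_squarefree_mul_sq {D : ℤ} (hD : Squarefree D) {y : ℚ} {k : ℤ}
    (h : D * y ^ 2 = k) : ∃ n : ℤ, (n : ℚ) = y := by
  have hD0 : (D : ℚ) ≠ 0 := Int.cast_ne_zero.2 hD.ne_zero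
  have hsq : (D * y) ^ 2 = (D * k : ℤ) := by
    push_cast
    rw [← h]
    ring
  obtain ⟨m, hm⟩ := IsIntegrallyClosed.exists_algebraMap_eq_of_isIntegral_pow (R := ℤ) two_pos
    (x := (D * y : ℚ)) (hsq ▸ isIntegral_algebraMap (A := ℚ) (x := D * k))
  rw [eq_intCast] at hm
  rw [← hm] at hsq
  obtain ⟨n, rfl⟩ : D ∣ m := (hD.dvd_pow_iff_dvd two_ne_zero).1 ⟨k, by exact_mod_cast hsq⟩
  refine ⟨n, mul_left_cancel₀ hD0 ?_⟩
  rw [← hm, Int.cast_mul]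

theorem exists_int_eq_of_sq_add_int_mul {x : ℚ} {m k : ℤ} (h : x ^ 2 + m * x = k) :
    ∃ n : ℤ, (n : ℚ) = x := by
  refine IsIntegrallyClosed.isIntegral_iff.1
    ⟨Polynomial.X ^ 2 + Polynomial.C m * Polynomial.X - Polynomial.C k, by monicity!, ?_⟩
  simp only [Polynomial.eval₂_sub, Polynomial.eval₂_add, Polynomial.eval₂_mul, Polynomial.eval₂_pow,
    Polynomial.eval₂_X, Polynomial.eval₂_C]
  rw [eq_intCast, eq_intCast, h, sub_self]

variable {a b : ℤ}

theorem exists_int_eq_of_isIntegral (hsq : Squarefree (b ^ 2 + 4 * a))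
    {z : QuadraticAlgebra ℚ (a : ℚ) (b : ℚ)} (hz : IsIntegral ℤ z) :
    ∃ m n : ℤ, (m : ℚ) = z.re ∧ (n : ℚ) = z.im := by
  have hstar : IsIntegral ℤ (star z) := map_isIntegral_int (starRingEnd _) hz
  obtain ⟨T, hT⟩ : ∃ T : ℤ, (T : ℚ) = QuadraticAlgebra.trace z := by
    refine IsIntegrallyClosed.isIntegral_iff.1 (isIntegral_algebraMap_iff
      (QuadraticAlgebra.algebraMap_injective (a := (a : ℚ)) (b := b)) |>.1 ?_)
    rw [QuadraticAlgebra.algebraMap_trace_eq_add_star]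
    exact hz.add hstar
  obtain ⟨N, hN⟩ : ∃ N : ℤ, (N : ℚ) = z.norm := by
    refine IsIntegrallyClosed.isIntegral_iff.1 (isIntegral_algebraMap_iff
      (QuadraticAlgebra.algebraMap_injective (a := (a : ℚ)) (b := b)) |>.1 ?_)
    rw [QuadraticAlgebra.algebraMap_norm_eq_mul_star]
    exact hz.mul hstar
  rw [QuadraticAlgebra.trace_def] at hT
  rw [QuadraticAlgebra.norm_def] at hN
  obtain ⟨n, hn⟩ := exists_int_eq_of_squarefree_mul_sq hsq (y := z.im) (k := T ^ 2 - 4 * N) (by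
    push_cast
    rw [hT, hN]
    ring)
  obtain ⟨m, hm⟩ := exists_int_eq_of_sq_add_int_mul (x := z.re) (m := b * n)
    (k := N + a * n ^ 2) (by
      push_cast
      rw [hN, hn]
      ring)
  exact ⟨m, n, hm, hn⟩

theorem bijective_lift_of_adjoin_eq_top {k L : Type*} [Field k] [Field L] [Algebra k L] {a b : k}
    [Fact (∀ r, r ^ 2 ≠ a + b * r)] {ω : L} (hω : ω * ω = a • 1 + b • ω)
    (hgen : IntermediateField.adjoin k {ω} = ⊤) :
    Function.Bijective (QuadraticAlgebra.lift ⟨ω, hω⟩) := by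
  refine ⟨RingHom.injective _, ?_⟩
  rw [← AlgHom.fieldRange_eq_top, eq_top_iff, ← hgen, IntermediateField.adjoin_simple_le_iff]
  exact ⟨QuadraticAlgebra.omega, by simp [QuadraticAlgebra.lift]⟩

theorem nonempty_ringEquiv_ringOfIntegers {K : Type*} [Field K] [CharZero K]
    [Fact (∀ r : ℚ, r ^ 2 ≠ a + b * r)] (hsq : Squarefree (b ^ 2 + 4 * a)) {ω : K}
    (hω : ω * ω = a • 1 + b • ω)
    (hgen : IntermediateField.adjoin ℚ {ω} = ⊤) :
    Nonempty (QuadraticAlgebra ℤ a b ≃+* 𝓞 K) := by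
  have hωℚ : ω * ω = (a : ℚ) • (1 : K) + (b : ℚ) • ω := by
    rw [hω, Int.cast_smul_eq_zsmul, Int.cast_smul_eq_zsmul]
  have hωint : IsIntegral ℤ ω := by
    refine ⟨Polynomial.X ^ 2 - Polynomial.C b * Polynomial.X - Polynomial.C a, by monicity!, ?_⟩
    simp [sq, hω, -eq_intCast]
  obtain ⟨ω', rfl⟩ : ∃ ω' : 𝓞 K, (ω' : K) = ω := ⟨⟨ω, hωint⟩, rfl⟩
  have hω' : ω' * ω' = a • 1 + b • ω' := RingOfIntegers.ext (by simpa using hω)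
  let e := QuadraticAlgebra.lift ⟨(ω' : K), hωℚ⟩
  have he : Function.Bijective e := bijective_lift_of_adjoin_eq_top hωℚ hgen
  let f : QuadraticAlgebra ℤ a b →ₐ[ℤ] 𝓞 K := QuadraticAlgebra.lift ⟨ω', hω'⟩
  have hf (z) : (f z : K) = e ⟨z.re, z.im⟩ := by
    simp [f, e, QuadraticAlgebra.lift, Algebra.smul_def]
  refine ⟨RingEquiv.ofBijective f ⟨fun z w hzw ↦ ?_, fun x ↦ ?_⟩⟩
  · have := he.1 ((hf z).symm.trans ((congrArg _ hzw).trans (hf w)))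
    simpa [QuadraticAlgebra.ext_iff] using this
  · obtain ⟨z, hz⟩ := he.2 x
    have hzint : IsIntegral ℤ z := (isIntegral_algHom_iff (e.restrictScalars ℤ) he.1).1 (by
      simpa [hz] using RingOfIntegers.isIntegral_coe x)
    obtain ⟨m, n, hm, hn⟩ := exists_int_eq_of_isIntegral hsq hzint
    refine ⟨⟨m, n⟩, RingOfIntegers.ext ?_⟩
    rw [hf, ← hz, hm, hn]

theorem nonempty_ringEquiv_ringOfIntegers_of_sq_eq_neg {p : ℕ} [Fact p.Prime] {a : ℤ}
    (ha : (p : ℤ) = -4 * a - 1) {K : Type*} [Field K] [CharZero K] {s : K}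
    (hs : s ^ 2 = -(p : K)) (hgen : IntermediateField.adjoin ℚ {s} = ⊤) :
    Nonempty (QuadraticAlgebra ℤ a 1 ≃+* 𝓞 K) := by
  have hD : (1 : ℤ) ^ 2 + 4 * a = -p := by linarith
  have hno_root : Fact (∀ r : ℚ, r ^ 2 ≠ a + (1 : ℤ) * r) := ⟨fun r hr ↦ by
    have hp : (0 : ℚ) < p := Nat.cast_pos.2 (Fact.out : p.Prime).pos
    have haℚ : (p : ℚ) = -4 * a - 1 := by exact_mod_cast ha
    push_cast at hr
    linarith [sq_nonneg (2 * r - 1)]⟩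
  have hsq : Squarefree ((1 : ℤ) ^ 2 + 4 * a) := by
    rw [hD]
    exact (Nat.prime_iff_prime_int.1 Fact.out).neg.squarefree
  have haK : (p : K) = -4 * a - 1 := by exact_mod_cast congrArg (Int.cast : ℤ → K) ha
  have hω : (1 + s) / 2 * ((1 + s) / 2) = a • 1 + (1 : ℤ) • ((1 + s) / 2) := by
    rw [zsmul_one, one_zsmul]
    linear_combination hs / 4 - haK / 4
  refine nonempty_ringEquiv_ringOfIntegers hsq hω (eq_top_iff.2 ?_)
  rw [← hgen, IntermediateField.adjoin_simple_le_iff]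
  have hmem := IntermediateField.mem_adjoin_simple_self ℚ ((1 + s) / 2)
  have hs_mem := sub_mem (mul_mem (ofNat_mem _ 2) hmem) (one_mem _)
  rwa [mul_div_cancel₀ _ two_ne_zero, add_sub_cancel_left] at hs_mem

end RingOfIntegers

section Units

open scoped QuadraticAlgebra

variable {a b : ℤ}

theorem isUnit_iff_eq_one_or_eq_neg_one_of_discrim_lt (hD : b ^ 2 + 4 * a < -4)
    {z : QuadraticAlgebra ℤ a b} : IsUnit z ↔ z = 1 ∨ z = -1 := by
  refine ⟨fun hz ↦ ?_, by rintro (rfl | rfl) <;> simp⟩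
  have hpos : 0 < z.norm := norm_pos_of_discrim_neg (by linarith) hz.ne_zero
  have hnorm : z.norm = 1 := by
    have := Int.isUnit_iff.1 (QuadraticAlgebra.isUnit_iff_norm_isUnit.1 hz)
    lia
  rw [QuadraticAlgebra.norm_def] at hnorm
  have him : z.im = 0 := by
    by_contra him
    have : 1 ≤ z.im ^ 2 := Int.add_one_le_iff.2 (sq_pos_of_ne_zero him)
    nlinarith [sq_nonneg (2 * z.re + b * z.im)]
  have hre : z.re = 1 ∨ z.re = -1 := by
    rw [him] at hnorm
    exact sq_eq_one_iff.1 (by linarith)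
  simpa [QuadraticAlgebra.ext_iff, him] using hre

theorem card_units_eq_two_of_discrim_lt (hD : b ^ 2 + 4 * a < -4) :
    Nat.card (QuadraticAlgebra ℤ a b)ˣ = 2 := by
  have huniv : (Set.univ : Set (QuadraticAlgebra ℤ a b)ˣ) = {1, -1} := by
    exact (Set.eq_univ_of_forall fun u ↦
      ((isUnit_iff_eq_one_or_eq_neg_one_of_discrim_lt hD).1 u.isUnit).imp Units.ext Units.ext).symm
  rw [← Nat.card_univ, huniv, Nat.card_coe_set_eq, Set.ncard_pair]
  simp [Units.ext_iff, QuadraticAlgebra.ext_iff]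

end Units

section HalfRangeSums

theorem sum_range_two_mul_eq_sum_add_reflect {M : Type*} [AddCommMonoid M] (f : ℕ → M) (n : ℕ) :
    ∑ i ∈ Finset.range (2 * n), f i = ∑ i ∈ Finset.range n, (f i + f (2 * n - 1 - i)) := by
  rw [Finset.sum_add_distrib, two_mul, Finset.sum_range_add,
    ← Finset.sum_range_reflect (fun i ↦ f (n + i))]
  congr 1
  refine Finset.sum_congr rfl fun i hi ↦ congrArg f ?_
  have := Finset.mem_range.1 hi
  lia

theorem sum_range_two_mul_eq_sum_even_add_odd {M : Type*} [AddCommMonoid M] (f : ℕ → M) (n : ℕ) :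
    ∑ i ∈ Finset.range (2 * n), f i =
      ∑ i ∈ Finset.range n, (f (2 * i) + f (2 * i + 1)) := by
  induction n with
  | zero => simp
  | succ n ih => rw [Nat.mul_succ, Finset.sum_range_succ, Finset.sum_range_succ, ih,
      Finset.sum_range_succ, add_assoc]

theorem sum_range_two_mul_eq_sum_even_add_reflect {M : Type*} [AddCommMonoid M] (f : ℕ → M)
    (n : ℕ) :
    ∑ i ∈ Finset.range (2 * n), f i =
      ∑ i ∈ Finset.range n, (f (2 * i) + f (2 * n - 1 - 2 * i)) := by
  rw [sum_range_two_mul_eq_sum_even_add_odd, Finset.sum_add_distrib, Finset.sum_add_distrib,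
    ← Finset.sum_range_reflect (fun i ↦ f (2 * i + 1))]
  congr 1
  refine Finset.sum_congr rfl fun i hi ↦ congrArg f ?_
  have := Finset.mem_range.1 hi
  lia

variable {p : ℕ} [Fact p.Prime]

theorem legendreSym_self : legendreSym p p = 0 :=
  (legendreSym.eq_zero_iff p p).2 (by simp)

theorem legendreSym_sub_eq_neg (hp : p % 4 = 3) (x : ℤ) :
    legendreSym p (p - x) = -legendreSym p x := by
  have hmod : legendreSym p (p - x) = legendreSym p (-1 * x) := by
    rw [legendreSym, legendreSym]
    simp
  rw [hmod, legendreSym.mul, legendreSym.at_neg_one (by lia), ZMod.χ₄_nat_three_mod_four hp,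
    neg_one_mul]

theorem sum_range_mul_legendreSym_eq (hp : p % 4 = 3) {n : ℕ} (hn : p + 1 = 2 * n) :
    ∑ i ∈ Finset.range (p + 1), i * legendreSym p i =
      2 * ∑ i ∈ Finset.range n, i * legendreSym p i -
        p * ∑ i ∈ Finset.range n, legendreSym p i := by
  rw [hn, sum_range_two_mul_eq_sum_add_reflect, Finset.mul_sum, Finset.mul_sum,
    ← Finset.sum_sub_distrib]
  refine Finset.sum_congr rfl fun i hi ↦ ?_
  have hcast : ((2 * n - 1 - i : ℕ) : ℤ) = p - i := by
    have := Finset.mem_range.1 hi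
    lia
  rw [hcast, legendreSym_sub_eq_neg hp]
  ring

theorem sum_range_mul_legendreSym_eq_legendreSym_two_mul (hp : p % 4 = 3) {n : ℕ}
    (hn : p + 1 = 2 * n) :
    ∑ i ∈ Finset.range (p + 1), i * legendreSym p i =
      legendreSym p 2 * (4 * ∑ i ∈ Finset.range n, i * legendreSym p i -
        p * ∑ i ∈ Finset.range n, legendreSym p i) := by
  rw [hn, sum_range_two_mul_eq_sum_even_add_reflect, Finset.mul_sum, Finset.mul_sum,
    ← Finset.sum_sub_distrib, Finset.mul_sum]
  refine Finset.sum_congr rfl fun i hi ↦ ?_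
  have hcast : ((2 * n - 1 - 2 * i : ℕ) : ℤ) = p - 2 * i := by
    have := Finset.mem_range.1 hi
    lia
  rw [hcast, legendreSym_sub_eq_neg hp, Nat.cast_mul, Nat.cast_ofNat, legendreSym.mul]
  ring

theorem mul_sum_Icc_legendreSym_eq (hp : p % 4 = 3) :
    p * ∑ i ∈ Finset.Icc 1 ((p - 1) / 2), legendreSym p i =
      (legendreSym p 2 - 2) * ∑ i ∈ Finset.range p, i * legendreSym p i := by
  obtain ⟨n, hn⟩ : ∃ n, p + 1 = 2 * n := ⟨(p + 1) / 2, by lia⟩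
  have hsq : legendreSym p 2 ^ 2 = 1 := by
    refine legendreSym.sq_one p fun h ↦ ?_
    have : p ∣ 2 := (ZMod.natCast_eq_zero_iff 2 p).1 (by exact_mod_cast h)
    have := Nat.le_of_dvd two_pos this
    lia
  have hhalf : ∑ i ∈ Finset.Icc 1 ((p - 1) / 2), legendreSym p i =
      ∑ i ∈ Finset.range n, legendreSym p i := by
    rw [Finset.sum_range_eq_add_Ico _ (by lia), Nat.cast_zero, legendreSym.at_zero, zero_add]
    congr 1
    ext i
    simp only [Finset.mem_Icc, Finset.mem_Ico]
    lia
  have hfull : ∑ i ∈ Finset.range p, i * legendreSym p i =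
      ∑ i ∈ Finset.range (p + 1), i * legendreSym p i := by
    rw [Finset.sum_range_succ, legendreSym_self, mul_zero, add_zero]
  have hreflect := sum_range_mul_legendreSym_eq hp hn
  have heven := sum_range_mul_legendreSym_eq_legendreSym_two_mul hp hn
  rw [hhalf, hfull]
  linear_combination 2 * hreflect - legendreSym p 2 * heven -
    (4 * ∑ i ∈ Finset.range n, i * legendreSym p i -
      p * ∑ i ∈ Finset.range n, legendreSym p i) * hsq

theorem sum_range_legendreSym_eq_zero (hp : p % 4 = 3) :
    ∑ i ∈ Finset.range p, legendreSym p i = 0 := by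
  have hneg : ∑ i ∈ Finset.range (p + 1), legendreSym p i =
      -∑ i ∈ Finset.range (p + 1), legendreSym p i := by
    rw [← Finset.sum_neg_distrib]
    refine (Finset.sum_range_reflect _ _).symm.trans (Finset.sum_congr rfl fun i hi ↦ ?_)
    rw [Nat.add_sub_cancel, Nat.cast_sub (Nat.lt_succ_iff.1 (Finset.mem_range.1 hi)),
      legendreSym_sub_eq_neg hp]
  rw [Finset.sum_range_succ, legendreSym_self, add_zero] at hneg
  linarith

end HalfRangeSums

section ClassNumber

theorem sum_range_sum_range_succ_eq {R : Type*} [CommRing R] (f : ℕ → R) (n : ℕ) :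
    ∑ i ∈ Finset.range n, ∑ j ∈ Finset.range (i + 1), f j =
      n * ∑ j ∈ Finset.range n, f j - ∑ j ∈ Finset.range n, j * f j := by
  induction n with
  | zero => simp
  | succ n ih =>
    simp only [Finset.sum_range_succ] at ih ⊢
    push_cast
    linear_combination ih

variable {p : ℕ} [Fact p.Prime] {a : ℤ}

theorem mul_card_classGroup_eq_neg_sum_mul_legendreSym [IsDedekindDomain (QuadraticAlgebra ℤ a 1)]
    [Finite (ClassGroup (QuadraticAlgebra ℤ a 1))] (hp : p % 4 = 3) (hp3 : p ≠ 3)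
    (ha : (p : ℤ) = -4 * a - 1) :
    (p * Nat.card (ClassGroup (QuadraticAlgebra ℤ a 1)) : ℤ) =
      -∑ i ∈ Finset.range p, i * legendreSym p i := by
  have hunits : Nat.card (QuadraticAlgebra ℤ a 1)ˣ = 2 := card_units_eq_two_of_discrim_lt (by lia)
  have : Finite (QuadraticAlgebra ℤ a 1)ˣ := Nat.finite_of_card_ne_zero (by lia)
  let χ : ℕ →*₀ ℤ := (legendreSym.hom p).comp (Nat.castRingHom ℤ).toMonoidWithZeroHom
  have hχ (q : ℕ) (hq : q.Prime) : (idealCount (QuadraticAlgebra ℤ a 1) q : ℤ) = 1 + χ q := by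
    have := Fact.mk hq
    rw [idealCount_quadraticAlgebra_prime hq]
    exact card_quadratic_roots_eq_one_add_legendreSym ha
  have hper : Function.Periodic χ p := fun n ↦ by
    change legendreSym p (n + p : ℕ) = legendreSym p n
    simp [legendreSym]
  have hsum : ∑ i ∈ Finset.range p, χ i = 0 := sum_range_legendreSym_eq_zero hp
  have h := two_mul_card_classGroup_eq_card_units_mul_sum (by lia) hχ hper (by lia) hsum
  rw [sum_range_sum_range_succ_eq, hsum, hunits] at h
  change _ = _ * (_ - ∑ i ∈ Finset.range p, i * legendreSym p i) at h
  push_cast at h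
  linarith

theorem card_classGroup_eq_classNumber_of_ringEquiv {R K : Type*} [CommRing R] [IsDomain R]
    [Field K] [NumberField K] (e : R ≃+* NumberField.RingOfIntegers K) :
    Nat.card (ClassGroup R) = NumberField.classNumber K := by
  rw [Nat.card_congr (ClassGroup.mulEquiv e).toEquiv, Nat.card_eq_fintype_card]
  rfl

end ClassNumber

/-- **Dirichlet's class number formula for the half-interval character sum.**
For a prime `p ≡ 3 (mod 4)`, `p ≠ 3`, and any number field `K = ℚ(√-p)`
(i.e. generated over `ℚ` by an element `s` with `s ^ 2 = -p`), the sum of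
Legendre symbols `∑_{n=1}^{(p-1)/2} (n/p)` equals `(2 - (2/p)) · h(-p)`. -/
theorem stmt_0 (p : ℕ) [Fact p.Prime] (hp4 : p % 4 = 3) (hp3 : p ≠ 3)
    (K : Type*) [Field K] [NumberField K] (s : K)
    (hs : s ^ 2 = -(p : K)) (hgen : IntermediateField.adjoin ℚ {s} = ⊤) :
    ∑ n ∈ Finset.Icc 1 ((p - 1) / 2), legendreSym p (n : ℤ) =
      (2 - legendreSym p 2) * (NumberField.classNumber K : ℤ) := by
  obtain ⟨a, ha⟩ : ∃ a : ℤ, (p : ℤ) = -4 * a - 1 := ⟨-((p + 1) / 4), by lia⟩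
  obtain ⟨e⟩ := nonempty_ringEquiv_ringOfIntegers_of_sq_eq_neg ha hs hgen
  have := isDedekindDomain_of_ringEquiv e.symm
  have hcard := card_classGroup_eq_classNumber_of_ringEquiv e
  have : Finite (ClassGroup (QuadraticAlgebra ℤ a 1)) :=
    Nat.finite_of_card_ne_zero (hcard ▸ NumberField.classNumber_ne_zero K)
  have hclass := mul_card_classGroup_eq_neg_sum_mul_legendreSym hp4 hp3 ha
  have hp0 : (p : ℤ) ≠ 0 := by lia
  rw [hcard] at hclass
  refine mul_left_cancel₀ hp0 ?_
  rw [mul_sum_Icc_legendreSym_eq hp4]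
  linear_combination (legendreSym p 2 - 2) * hclass
end

section
/- Let α be a real number with 0 < α < 1 and let p be an odd prime such that αp is not an integer. Then the symmetric partial sums Σ_{0<|m|≤M} ((1 − e^{−2πiαm})/(2πim)) · (m/p) converge as M → ∞, and L(α,p) = τ(χ_p) · lim_{M→∞} Σ_{0<|m|≤M} ((1 − e^{−2πiαm})/(2πim)) · (m/p), where the equality is of complex numbers. -/
open Filter

/-!
The symmetric Fourier series `∑_{m ≠ 0} e^{2πimx} / (2πim)` of the sawtooth converges to
`1 / 2 - {x}` for `x ∉ ℤ`, being the imaginary part of `-log (1 - z) / π` at `z = e^{2πix}`: the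
power series of the logarithm converges on the unit circle away from `1` by Dirichlet's test, and
Abel's limit theorem identifies its sum. Subtracting the values at `j / N - α` from those at `j / N`
leaves `{j / N - α} - j / N`, which for `0 ≤ α < 1` is the indicator of `j < αN` minus the
constant `α`. Weighting by a nontrivial character `χ` kills the constant and produces the partial
sum of `χ` up to `αN`. On the Fourier side the same weighting produces `∑ j, χ j e^{2πijm/N}`,
which is `χ⁻¹ m` times the Gauss sum when `χ` is primitive. The Gauss sum does not vanish, since
otherwise the discrete Fourier transform of `χ` would.
-/

section

open Complex Finset
open scoped Real Topology ComplexConjugate ZMod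

lemma exists_tendsto_sum_pow_div {z : ℂ} (hz : ‖z‖ ≤ 1) (hz1 : z ≠ 1) :
    ∃ l, Tendsto (fun n ↦ ∑ i ∈ range n, z ^ i / i) atTop (𝓝 l) := by
  have hbound (n : ℕ) : ‖∑ i ∈ range n, z ^ (i + 1)‖ ≤ 2 / ‖z - 1‖ := by
    have hgeom : ∑ i ∈ range n, z ^ (i + 1) = z * ((z ^ n - 1) / (z - 1)) := by
      simp only [← geom_sum_eq hz1, mul_sum, pow_succ']
    have hnum : ‖z ^ n - 1‖ ≤ 2 := by
      calc ‖z ^ n - 1‖ ≤ ‖z‖ ^ n + 1 := by simpa using norm_sub_le (z ^ n) 1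
        _ ≤ 1 + 1 := by gcongr; exact pow_le_one₀ (norm_nonneg z) hz
        _ = 2 := by norm_num
    calc ‖∑ i ∈ range n, z ^ (i + 1)‖ = ‖z‖ * (‖z ^ n - 1‖ / ‖z - 1‖) := by
          rw [hgeom, norm_mul, norm_div]
      _ ≤ 1 * (2 / ‖z - 1‖) := by gcongr
      _ = 2 / ‖z - 1‖ := one_mul _
  have hanti : Antitone fun i : ℕ ↦ 1 / ((i : ℝ) + 1) := fun _ _ _ ↦ by dsimp only; gcongr
  obtain ⟨l, hl⟩ := cauchySeq_tendsto_of_complete <|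
    hanti.cauchySeq_series_mul_of_tendsto_zero_of_bounded
      tendsto_one_div_add_atTop_nhds_zero_nat hbound
  refine ⟨l, (tendsto_add_atTop_iff_nat 1).1 (hl.congr fun n ↦ ?_)⟩
  simp [sum_range_succ' _ n, div_eq_inv_mul]

lemma one_sub_mem_slitPlane {z : ℂ} (hz : ‖z‖ ≤ 1) (hz1 : z ≠ 1) : 1 - z ∈ slitPlane := by
  refine Or.inl ?_
  rw [sub_re, one_re, sub_pos]
  refine lt_of_le_of_ne ((re_le_norm z).trans hz) fun hre ↦ hz1 ?_
  have him := (abs_re_eq_norm (z := z)).1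
    (le_antisymm (abs_re_le_norm z) (by simpa [hre] using hz))
  exact Complex.ext hre him

lemma tendsto_sum_pow_div_neg_log {z : ℂ} (hz : ‖z‖ ≤ 1) (hz1 : z ≠ 1) :
    Tendsto (fun n ↦ ∑ i ∈ range n, z ^ i / i) atTop (𝓝 (-log (1 - z))) := by
  obtain ⟨l, hl⟩ := exists_tendsto_sum_pow_div hz hz1
  have habel : Tendsto (fun r : ℝ ↦ ∑' i : ℕ, z ^ i / i * (r : ℂ) ^ i) (𝓝[<] 1) (𝓝 l) :=
    tendsto_map'_iff.1 (tendsto_tsum_powerSeries_nhdsWithin_lt hl)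
  have hlog : Tendsto (fun r : ℝ ↦ -log (1 - r * z)) (𝓝[<] 1) (𝓝 (-log (1 - z))) := by
    have hcont : ContinuousAt (fun r : ℝ ↦ -log (1 - r * z)) 1 := by
      refine (ContinuousAt.clog (by fun_prop) ?_).neg
      simpa using one_sub_mem_slitPlane hz hz1
    simpa using hcont.tendsto.mono_left nhdsWithin_le_nhds
  have hsum : ∀ᶠ r : ℝ in 𝓝[<] 1, -log (1 - r * z) = ∑' i : ℕ, z ^ i / i * (r : ℂ) ^ i := by
    filter_upwards [Ioo_mem_nhdsLT zero_lt_one] with r hr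
    have hrz : ‖(r : ℂ) * z‖ < 1 := by
      rw [norm_mul, norm_real, Real.norm_of_nonneg hr.1.le]
      exact (mul_le_of_le_one_right hr.1.le hz).trans_lt hr.2
    rw [← (hasSum_taylorSeries_neg_log hrz).tsum_eq]
    exact tsum_congr fun i ↦ by ring
  rwa [← tendsto_nhds_unique_of_eventuallyEq hlog habel hsum] at hl

lemma arg_one_sub_exp_two_mul_I {θ : ℝ} (hθ : θ ∈ Set.Ioo 0 π) :
    arg (1 - exp (2 * θ * I)) = θ - π / 2 := by
  have hpolar : 1 - exp (2 * θ * I) = (2 * Real.sin θ : ℝ) *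
      (cos (θ - π / 2 : ℝ) + sin (θ - π / 2 : ℝ) * I) := by
    have hcis : exp (2 * θ * I) = (cos θ + sin θ * I) ^ 2 := by
      rw [← exp_mul_I, ← exp_nat_mul]; push_cast; ring_nf
    push_cast
    rw [cos_sub_pi_div_two, sin_sub_pi_div_two, hcis]
    linear_combination (-sin (θ : ℂ) ^ 2) * I_sq - sin_sq_add_cos_sq (θ : ℂ)
  rw [hpolar, arg_mul_cos_add_sin_mul_I (mul_pos two_pos (Real.sin_pos_of_mem_Ioo hθ))]
  constructor <;> linarith [hθ.1, hθ.2, Real.pi_pos]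

lemma sum_Icc_neg_erase_zero {A : Type*} [AddCommGroup A] {g : ℤ → A} (hg : g 0 = 0) (M : ℕ) :
    ∑ m ∈ (Icc (-M : ℤ) M).erase 0, g m = ∑ k ∈ range (M + 1), (g k + g (-k)) := by
  rw [sum_erase _ hg]
  induction M with
  | zero => simp [hg]
  | succ M ih =>
    rw [sum_range_succ, ← ih, Nat.cast_succ, sum_Icc_succ_eq_add_endpoints, add_comm]

/-- The `M`-th symmetric partial sum of the Fourier series of the sawtooth `x ↦ 1 / 2 - {x}`. -/
noncomputable def sawtoothPartialSum (M : ℕ) (x : UnitAddCircle) : ℂ :=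
  ∑ m ∈ (Icc (-M : ℤ) M).erase 0, fourier m x / (2 * π * I * m)

lemma sawtoothPartialSum_eq_sum_range (M : ℕ) (x : UnitAddCircle) :
    sawtoothPartialSum M x =
      (∑ k ∈ range (M + 1), fourier 1 x ^ k / k -
        ∑ k ∈ range (M + 1), conj (fourier 1 x) ^ k / k) / (2 * π * I) := by
  rw [sawtoothPartialSum, sum_Icc_neg_erase_zero (by simp), ← sum_sub_distrib, sum_div]
  refine sum_congr rfl fun k _ ↦ ?_
  have hpow : fourier k x = fourier 1 x ^ k := by simp [fourier_apply, AddCircle.toCircle_nsmul]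
  rw [fourier_neg, hpow, map_pow]
  push_cast
  ring

lemma tendsto_sawtoothPartialSum_of_mem_Ioo {x : ℝ} (hx : x ∈ Set.Ioo 0 1) :
    Tendsto (fun M ↦ sawtoothPartialSum M x) atTop (𝓝 (1 / 2 - x)) := by
  set z : ℂ := fourier 1 (x : UnitAddCircle) with hz_def
  have hz_exp : z = exp (2 * (π * x : ℝ) * I) := by
    rw [hz_def, fourier_coe_apply]; push_cast; ring_nf
  have harg : arg (1 - z) = π * x - π / 2 := by
    rw [hz_exp]
    exact arg_one_sub_exp_two_mul_I
      ⟨mul_pos Real.pi_pos hx.1, mul_lt_of_lt_one_right Real.pi_pos hx.2⟩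
  have hz : ‖z‖ ≤ 1 := by rw [hz_def, fourier_one, Circle.norm_coe]
  have hz1 : z ≠ 1 := by
    have hx0 : (x : UnitAddCircle) ≠ 0 := by
      rw [Ne, AddCircle.coe_eq_zero_iff_of_mem_Ico ⟨hx.1.le, hx.2⟩]
      exact hx.1.ne'
    rwa [hz_def, fourier_one, Ne, Circle.coe_eq_one, ← AddCircle.toCircle_zero,
      (AddCircle.injective_toCircle one_ne_zero).eq_iff]
  have harg_ne : arg (1 - z) ≠ π :=
    (mem_slitPlane_iff_arg.1 (one_sub_mem_slitPlane hz hz1)).1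
  have hlim : (-log (1 - z) - -log (1 - conj z)) / (2 * π * I) = 1 / 2 - x := by
    have hconj : log (1 - conj z) = conj (log (1 - z)) := by
      rw [← log_conj _ harg_ne, map_sub, map_one]
    rw [hconj, neg_sub_neg, ← neg_sub, sub_conj, log_im, harg]
    have := Real.pi_ne_zero
    push_cast
    field_simp
    ring
  have hz' : ‖conj z‖ ≤ 1 := by rwa [norm_conj]
  have hz1' : conj z ≠ 1 := by rwa [Ne, map_eq_one_iff _ (starRingEnd ℂ).injective]
  simp only [sawtoothPartialSum_eq_sum_range, ← hlim]
  exact (((tendsto_sum_pow_div_neg_log hz hz1).sub (tendsto_sum_pow_div_neg_log hz' hz1')).comp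
    (tendsto_add_atTop_nat 1)).div_const _

lemma tendsto_sawtoothPartialSum {x : ℝ} (hx : Int.fract x ≠ 0) :
    Tendsto (fun M ↦ sawtoothPartialSum M x) atTop (𝓝 (1 / 2 - Int.fract x)) := by
  rw [← AddCircle.coe_fract x]
  exact tendsto_sawtoothPartialSum_of_mem_Ioo
    ⟨(Int.fract_nonneg x).lt_of_ne' hx, Int.fract_lt_one x⟩

lemma fract_sub_eq_add_ite {R : Type*} [CommRing R] [LinearOrder R] [IsStrictOrderedRing R]
    [FloorRing R] {x y : R} (hx : x ∈ Set.Ico 0 1) (hy : y ∈ Set.Ico 0 1) :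
    Int.fract (x - y) = x - y + if x < y then 1 else 0 := by
  obtain ⟨hx0, hx1⟩ := hx
  obtain ⟨hy0, hy1⟩ := hy
  rw [Int.fract_eq_iff]
  split_ifs with h
  · exact ⟨by linarith, by linarith, -1, by push_cast; ring⟩
  · exact ⟨by linarith, by linarith, 0, by push_cast; ring⟩

lemma sum_Icc_one_floor_eq_sum_range_ceil {R A : Type*} [Semiring R] [LinearOrder R]
    [IsStrictOrderedRing R] [FloorSemiring R] [AddCommMonoid A] {f : ℕ → A} (hf : f 0 = 0)
    {x : R} (h0 : 0 ≤ x) (hx : ∀ k : ℕ, x ≠ k) :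
    ∑ n ∈ Icc 1 ⌊x⌋₊, f n = ∑ n ∈ range ⌈x⌉₊, f n := by
  have hlt : (⌊x⌋₊ : R) < x := (Nat.floor_le h0).lt_of_ne' (hx _)
  have hceil : ⌈x⌉₊ = ⌊x⌋₊ + 1 := (Nat.ceil_le_floor_add_one x).antisymm (Nat.lt_ceil.2 hlt)
  rw [hceil, sum_range_eq_add_Ico f (Nat.add_one_pos _), hf, zero_add, Ico_add_one_right_eq_Icc]

lemma periodic_sum_range_s4 {A : Type*} [AddCommMonoid A] {N : ℕ} {f : ℕ → A} (hf : f.Periodic N)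
    (h0 : ∑ i ∈ range N, f i = 0) :
    Function.Periodic (fun n ↦ ∑ i ∈ range n, f i) N := fun n ↦ by
  dsimp only
  rw [add_comm, sum_range_add, h0, zero_add]
  exact sum_congr rfl fun i _ ↦ by rw [add_comm, hf]

variable {N : ℕ} [NeZero N]

lemma sum_zmod_eq_sum_range {A : Type*} [AddCommMonoid A] (f : ZMod N → A) :
    ∑ j, f j = ∑ n ∈ range N, f n :=
  sum_nbij' ZMod.val (↑) (by simp [ZMod.val_lt]) (by simp) (by simp)
    (fun _ hn ↦ ZMod.val_cast_of_lt (mem_range.1 hn)) (by simp)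

lemma fract_val_div_sub (j : ZMod N) (α : ℝ) :
    Int.fract (j.val / N - α) =
      j.val / N - Int.fract α + if j.val < ⌈Int.fract α * N⌉₊ then 1 else 0 := by
  have hN : (0 : ℝ) < N := Nat.cast_pos.2 (NeZero.pos N)
  have hj : (j.val / N : ℝ) ∈ Set.Ico 0 1 :=
    ⟨by positivity, (div_lt_one hN).2 (Nat.cast_lt.2 j.val_lt)⟩
  conv_lhs => rw [← Int.fract_add_floor α, ← sub_sub, Int.fract_sub_intCast]
  rw [fract_sub_eq_add_ite hj ⟨Int.fract_nonneg α, Int.fract_lt_one α⟩]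
  simp only [div_lt_iff₀ hN, Nat.lt_ceil]

lemma sum_range_ceil_fract_mul {A : Type*} [AddCommMonoid A] {Φ : ZMod N → A} (hΦ : ∑ j, Φ j = 0)
    {α : ℝ} (hα : 0 ≤ α) :
    ∑ n ∈ range ⌈Int.fract α * N⌉₊, Φ n = ∑ n ∈ range ⌈α * N⌉₊, Φ n := by
  have hper := periodic_sum_range_s4 (N := N) (f := fun n ↦ Φ n) (fun n ↦ by simp)
    (by rwa [← sum_zmod_eq_sum_range])
  have hceil : ⌈α * N⌉₊ = ⌈Int.fract α * N⌉₊ + ⌊α⌋₊ * N := by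
    rw [← Nat.ceil_add_natCast (mul_nonneg (Int.fract_nonneg α) N.cast_nonneg), Nat.cast_mul,
      natCast_floor_eq_intCast_floor hα, ← add_mul, Int.fract_add_floor]
  rw [hceil]
  exact (hper.nat_mul ⌊α⌋₊ _).symm

lemma sum_mul_fract_sub_eq_sum_range_ceil {Φ : ZMod N → ℂ} (hΦ : ∑ j, Φ j = 0) {α : ℝ}
    (hα : 0 ≤ α) :
    ∑ j, Φ j * (Int.fract (j.val / N - α) - (j.val / N : ℝ) : ℝ) = ∑ n ∈ range ⌈α * N⌉₊, Φ n := by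
  have hceil : ⌈Int.fract α * N⌉₊ ≤ N :=
    Nat.ceil_le.2 (mul_le_of_le_one_left N.cast_nonneg (Int.fract_lt_one α).le)
  calc ∑ j, Φ j * (Int.fract (j.val / N - α) - (j.val / N : ℝ) : ℝ)
      = ∑ j, (if j.val < ⌈Int.fract α * N⌉₊ then Φ j else 0) - (∑ j, Φ j) * Int.fract α := by
        rw [sum_mul, ← sum_sub_distrib]
        refine sum_congr rfl fun j _ ↦ ?_
        rw [fract_val_div_sub]
        split_ifs <;> push_cast <;> ring
    _ = ∑ n ∈ range N, if n < ⌈Int.fract α * N⌉₊ then Φ n else 0 := by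
        rw [hΦ, zero_mul, sub_zero, sum_zmod_eq_sum_range]
        exact sum_congr rfl fun n hn ↦ by rw [ZMod.val_cast_of_lt (mem_range.1 hn)]
    _ = ∑ n ∈ range ⌈Int.fract α * N⌉₊, Φ n := by
        rw [← sum_filter]
        congr 1
        grind
    _ = ∑ n ∈ range ⌈α * N⌉₊, Φ n := sum_range_ceil_fract_mul hΦ hα

lemma fourier_toAddCircle (m : ℤ) (j : ZMod N) :
    fourier m (ZMod.toAddCircle j) = ZMod.stdAddChar (j * (m : ZMod N)) := by
  rw [fourier_apply, ← map_zsmul, zsmul_eq_mul, mul_comm]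
  rfl

lemma sum_mul_dft_neg_eq_sum_sawtoothPartialSum (Φ : ZMod N → ℂ) (α : ℝ) (M : ℕ) :
    ∑ m ∈ (Icc (-M : ℤ) M).erase 0,
        (1 - exp (-2 * π * I * α * m)) / (2 * π * I * m) * 𝓕 Φ (-m) =
      ∑ j, Φ j * (sawtoothPartialSum M (ZMod.toAddCircle j) -
        sawtoothPartialSum M (ZMod.toAddCircle j - α)) := by
  simp only [sawtoothPartialSum, ← sum_sub_distrib, mul_sum]
  rw [sum_comm]
  refine sum_congr rfl fun m _ ↦ ?_
  rw [ZMod.dft_apply, mul_sum]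
  refine sum_congr rfl fun j _ ↦ ?_
  have hshift : fourier m (ZMod.toAddCircle j - α : UnitAddCircle) =
      fourier m (ZMod.toAddCircle j) * exp (-2 * π * I * α * m) := by
    have hexp : fourier m ((-α : ℝ) : UnitAddCircle) = exp (-2 * π * I * α * m) := by
      rw [fourier_coe_apply]; push_cast; ring_nf
    rw [← hexp, sub_eq_add_neg, ← AddCircle.coe_neg, fourier_apply, smul_add,
      AddCircle.toCircle_add, Circle.coe_mul, fourier_apply, fourier_apply]
  rw [hshift, fourier_toAddCircle, mul_neg, neg_neg, smul_eq_mul]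
  ring

lemma tendsto_sum_mul_dft_neg {Φ : ZMod N → ℂ} (hΦ0 : Φ 0 = 0) {α : ℝ}
    (hint : ∀ k : ℤ, α * N ≠ k) :
    Tendsto (fun M : ℕ ↦ ∑ m ∈ (Icc (-M : ℤ) M).erase 0,
        (1 - exp (-2 * π * I * α * m)) / (2 * π * I * m) * 𝓕 Φ (-m))
      atTop (𝓝 (∑ j, Φ j * (Int.fract (j.val / N - α) - (j.val / N : ℝ) : ℝ))) := by
  have hN : (0 : ℝ) < N := Nat.cast_pos.2 (NeZero.pos N)
  simp only [sum_mul_dft_neg_eq_sum_sawtoothPartialSum]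
  refine tendsto_finsetSum _ fun j _ ↦ ?_
  obtain rfl | hj := eq_or_ne j 0
  · simp [hΦ0]
  have hj_mem : (j.val / N : ℝ) ∈ Set.Ioo 0 1 :=
    ⟨div_pos (Nat.cast_pos.2 (ZMod.val_pos.2 hj)) hN, (div_lt_one hN).2 (Nat.cast_lt.2 j.val_lt)⟩
  have hfract : Int.fract (j.val / N - α) ≠ 0 := by
    rw [Ne, Int.fract_eq_zero_iff]
    rintro ⟨k, hk⟩
    refine hint (j.val - k * N) ?_
    push_cast
    rw [hk]
    field_simp
    ring
  have hlim := (tendsto_sawtoothPartialSum_of_mem_Ioo hj_mem).sub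
    (tendsto_sawtoothPartialSum hfract)
  rw [sub_sub_sub_cancel_left, ← ofReal_sub] at hlim
  rw [ZMod.toAddCircle_apply]
  exact hlim.const_mul (Φ j)

lemma gaussSum_stdAddChar_ne_zero {χ : DirichletCharacter ℂ N} (hχ : χ.IsPrimitive) :
    gaussSum χ ZMod.stdAddChar ≠ 0 := by
  intro h
  have hdft : 𝓕 χ = 0 := funext fun k ↦ by
    rw [hχ.fourierTransform_eq_inv_mul_gaussSum, h, mul_zero, Pi.zero_apply]
  have hzero : (χ : ZMod N → ℂ) = 0 := ZMod.dft.map_eq_zero_iff.1 hdft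
  simpa using congr_fun hzero 1

theorem stmt_4_general {χ : DirichletCharacter ℂ N} (hχ : χ.IsPrimitive) (hχ1 : χ ≠ 1) {α : ℝ}
    (h0 : 0 ≤ α) (hint : ∀ k : ℤ, α * N ≠ k) :
    ∃ l : ℂ,
      Tendsto (fun M : ℕ ↦ ∑ m ∈ (Icc (-M : ℤ) M).erase 0,
        (1 - exp (-2 * π * I * α * m)) / (2 * π * I * m) * χ⁻¹ m) atTop (𝓝 l) ∧
      ∑ n ∈ Icc 1 ⌊α * N⌋₊, χ n = gaussSum χ ZMod.stdAddChar * l := by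
  have hχ0 : χ 0 = 0 := χ.map_zero' fun hN ↦ hχ1 (χ.level_one' hN)
  have hτ := gaussSum_stdAddChar_ne_zero hχ
  have hL : ∑ j, χ j * (Int.fract (j.val / N - α) - (j.val / N : ℝ) : ℝ) =
      ∑ n ∈ Icc 1 ⌊α * N⌋₊, χ n := by
    rw [sum_mul_fract_sub_eq_sum_range_ceil (MulChar.sum_eq_zero_of_ne_one hχ1) h0,
      sum_Icc_one_floor_eq_sum_range_ceil (by rwa [Nat.cast_zero]) (by positivity)
        fun k ↦ mod_cast hint k]
  refine ⟨(gaussSum χ ZMod.stdAddChar)⁻¹ * ∑ n ∈ Icc 1 ⌊α * N⌋₊, χ n, ?_,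
    (mul_inv_cancel_left₀ hτ _).symm⟩
  rw [← hL]
  refine ((tendsto_sum_mul_dft_neg hχ0 hint).const_mul _).congr fun M ↦ ?_
  rw [mul_sum]
  refine sum_congr rfl fun m _ ↦ ?_
  rw [hχ.fourierTransform_eq_inv_mul_gaussSum, neg_neg]
  field_simp

lemma isPrimitive_of_prime_of_ne_one {R : Type*} [CommMonoidWithZero R] {p : ℕ} (hp : p.Prime)
    {χ : DirichletCharacter R p} (hχ : χ ≠ 1) : χ.IsPrimitive := by
  have : NeZero p := ⟨hp.ne_zero⟩
  exact (hp.eq_one_or_self_of_dvd _ χ.conductor_dvd_level).resolve_left fun h ↦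
    hχ (χ.eq_one_iff_conductor_eq_one.2 h)

/-- The Legendre symbol modulo `p` as a Dirichlet character; the paper's `χ_p`. -/
noncomputable def legendreChar (p : ℕ) [Fact p.Prime] : DirichletCharacter ℂ p :=
  (quadraticChar (ZMod p)).ringHomComp (Int.castRingHom ℂ)

variable {p : ℕ} [Fact p.Prime]

lemma legendreChar_intCast (m : ℤ) : legendreChar p m = legendreSym p m := rfl

lemma legendreChar_natCast (n : ℕ) : legendreChar p n = legendreSym p n := by
  rw [← legendreChar_intCast, Int.cast_natCast]

lemma inv_legendreChar : (legendreChar p)⁻¹ = legendreChar p :=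
  ((quadraticChar_isQuadratic (ZMod p)).comp _).inv

lemma legendreChar_ne_one (hp : p ≠ 2) : legendreChar p ≠ 1 :=
  (MulChar.ringHomComp_ne_one_iff Int.cast_injective).2 <|
    quadraticChar_ne_one (by rwa [ZMod.ringChar_zmod_n])

lemma gaussSum_legendreChar :
    gaussSum (legendreChar p) ZMod.stdAddChar =
      ∑ n ∈ range p, exp (2 * π * I * n / p) * legendreSym p n := by
  rw [gaussSum, sum_zmod_eq_sum_range]
  refine sum_congr rfl fun n _ ↦ ?_
  have hexp := ZMod.stdAddChar_coe (N := p) n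
  rw [Int.cast_natCast, Int.cast_natCast] at hexp
  rw [legendreChar_natCast, hexp, mul_comm]

end

/-- **Fourier expansion of `L(α,p)`.** For an odd prime `p` and `0 < α < 1`
with `αp ∉ ℤ`, the symmetric partial sums
`∑_{0<|m|≤M} ((1 - e^{-2πiαm})/(2πim)) (m/p)` converge, and
`L(α,p) = τ(χ_p) · lim_{M→∞} ∑_{0<|m|≤M} ((1 - e^{-2πiαm})/(2πim)) (m/p)`,
where `τ(χ_p) = ∑_{n=0}^{p-1} e^{2πin/p} (n/p)` is the quadratic Gauss sum. -/
theorem stmt_4 (p : ℕ) [Fact p.Prime] (hp : p ≠ 2) (α : ℝ) (h0 : 0 < α)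
    (h1 : α < 1) (hint : ∀ k : ℤ, α * (p : ℝ) ≠ (k : ℝ)) :
    ∃ l : ℂ,
      Tendsto (fun M : ℕ =>
          ∑ m ∈ (Finset.Icc (-(M : ℤ)) (M : ℤ)).erase 0,
            (1 - Complex.exp (-2 * Real.pi * Complex.I * (α : ℂ) * (m : ℂ))) /
                (2 * Real.pi * Complex.I * (m : ℂ)) * (legendreSym p m : ℂ))
        atTop (nhds l) ∧
      ((∑ n ∈ Finset.Icc 1 ⌊α * (p : ℝ)⌋₊, legendreSym p (n : ℤ) : ℤ) : ℂ) =
        (∑ n ∈ Finset.range p,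
            Complex.exp (2 * Real.pi * Complex.I * (n : ℂ) / (p : ℂ)) *
              (legendreSym p (n : ℤ) : ℂ)) * l := by
  have hχ : legendreChar p ≠ 1 := legendreChar_ne_one hp
  simpa only [← gaussSum_legendreChar, inv_legendreChar, legendreChar_intCast,
    legendreChar_natCast, Int.cast_sum] using
    stmt_4_general (isPrimitive_of_prime_of_ne_one Fact.out hχ) hχ h0.le hint
end

section
/- For every nonzero integer a there exist a positive integer q with q ≤ 4|a| and a Dirichlet character χ modulo q such that for every odd positive integer n the Jacobi symbol (a/n) equals χ(n), and moreover χ is nonprincipal if and only if a is not a perfect square. -/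
/-!
By quadratic reciprocity `n ↦ (a/n)` on odd `n` depends only on `n` modulo `4|a|`, so it defines a
character on the units modulo `4|a|`. If `a = c²`, this character is identically `1`. If `a` is not
a square, some odd `n` has `(a/n) = -1`. When `a = -c²`, take `n = 4c² - 1 ≡ 3 mod 4`. Otherwise
`a = pᵏ m` with `p` a prime not dividing `m` and `k` odd, and we choose `n ≡ 1 mod 4|m|` with
`(p/n) = -1`, so that `(a/n) = (p/n)ᵏ (m/n) = -1`.
-/

section

open scoped NumberTheorySymbols

lemma isSquare_of_forall_prime_even_factorization {n : ℕ}
    (h : ∀ p, p.Prime → Even (n.factorization p)) : IsSquare n := by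
  rcases eq_or_ne n 0 with rfl | hn
  · exact IsSquare.zero
  · rw [← Nat.prod_factorization_pow_eq_self hn]
    exact Finset.isSquare_prod _ fun p hp ↦ (h p (Nat.prime_of_mem_primeFactors hp)).isSquare_pow p

lemma exists_eq_prime_pow_mul_of_not_isSquare_natAbs {a : ℤ} (ha : ¬IsSquare a.natAbs) :
    ∃ (p k : ℕ) (m : ℤ), p.Prime ∧ Odd k ∧ ¬(p : ℤ) ∣ m ∧ a = p ^ k * m := by
  obtain ⟨p, hp, hodd⟩ : ∃ p, p.Prime ∧ Odd (a.natAbs.factorization p) := by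
    contrapose! ha
    exact isSquare_of_forall_prime_even_factorization fun p hp ↦ Nat.not_odd_iff_even.1 (ha p hp)
  have ha0 : a ≠ 0 := by
    rintro rfl
    exact ha IsSquare.zero
  have hfin : FiniteMultiplicity (p : ℤ) a := Int.finiteMultiplicity_iff.2 ⟨hp.ne_one, ha0⟩
  obtain ⟨m, ham, hpm⟩ := hfin.exists_eq_pow_mul_and_not_dvd
  refine ⟨p, multiplicity (p : ℤ) a, m, hp, ?_, hpm, ham⟩
  rwa [← Int.multiplicity_natAbs, Nat.multiplicity_eq_factorization hp (Int.natAbs_ne_zero.2 ha0)]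

lemma jacobiSym_neg_sq {c : ℤ} {n : ℕ} (hn : Odd n) (hc : c.gcd n = 1) :
    J(-c ^ 2 | n) = ZMod.χ₄ n := by
  rw [jacobiSym.neg _ hn, jacobiSym.sq_one' hc, mul_one]

lemma odd_of_modEq_one_four_mul {M n : ℕ} (h : n ≡ 1 [MOD 4 * M]) : Odd n := by
  have h4 : n % 4 = 1 := h.of_mul_right M
  exact Nat.odd_iff.2 (by omega)

lemma jacobiSym_eq_one_of_modEq_one {m : ℤ} {n : ℕ} (h : n ≡ 1 [MOD 4 * m.natAbs]) :
    J(m | n) = 1 := by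
  rw [jacobiSym.mod_right m (odd_of_modEq_one_four_mul h), h, ← jacobiSym.mod_right m odd_one,
    jacobiSym.one_right]

lemma jacobiSym_two_one_add_four_mul_of_odd {M : ℕ} (hM : Odd M) : J(2 | 1 + 4 * M) = -1 := by
  obtain ⟨r, rfl⟩ := hM
  have h8 : (1 + 4 * (2 * r + 1)) % 8 = 5 := by omega
  have hodd : (1 + 4 * (2 * r + 1)) % 2 = 1 := by omega
  rw [jacobiSym.at_two (Nat.odd_iff.2 hodd), ZMod.χ₈_nat_eq_if_mod_eight, h8, hodd]
  norm_num

lemma exists_modEq_one_jacobiSym_odd_prime_eq_neg_one {p M : ℕ} (hp : p.Prime) (hp2 : p ≠ 2)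
    (hpM : ¬p ∣ M) : ∃ n, n ≡ 1 [MOD 4 * M] ∧ J(p | n) = -1 := by
  have : Fact p.Prime := ⟨hp⟩
  obtain ⟨r, hr⟩ : ∃ r : ZMod p, ¬IsSquare r :=
    FiniteField.exists_nonsquare (by rwa [ZMod.ringChar_zmod_n])
  have hcop : Nat.Coprime (4 * M) p := by
    have h2p : Nat.Coprime 2 p := (Nat.coprime_primes Nat.prime_two hp).2 hp2.symm
    exact (h2p.pow_left 2).mul_left ((hp.coprime_iff_not_dvd.2 hpM).symm)
  obtain ⟨n, hn1, hnr⟩ := Nat.chineseRemainder hcop 1 r.val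
  have hnr' : (n : ZMod p) = r := by
    rw [(ZMod.natCast_eq_natCast_iff _ _ _).2 hnr, ZMod.natCast_zmod_val]
  refine ⟨n, hn1, ?_⟩
  rw [jacobiSym.quadratic_reciprocity_one_mod_four' (hp.odd_of_ne_two hp2) (hn1.of_mul_right M)]
  apply ZMod.nonsquare_iff_jacobiSym_eq_neg_one.2
  rwa [Int.cast_natCast, hnr']

lemma exists_modEq_one_jacobiSym_prime_eq_neg_one {p M : ℕ} (hp : p.Prime) (hpM : ¬p ∣ M) :
    ∃ n, n ≡ 1 [MOD 4 * M] ∧ J(p | n) = -1 := by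
  rcases eq_or_ne p 2 with rfl | hp2
  · have hM : Odd M := Nat.not_even_iff_odd.1 (mt Even.two_dvd hpM)
    exact ⟨1 + 4 * M, by simp [Nat.ModEq], jacobiSym_two_one_add_four_mul_of_odd hM⟩
  · exact exists_modEq_one_jacobiSym_odd_prime_eq_neg_one hp hp2 hpM

lemma exists_odd_jacobiSym_prime_pow_mul_eq_neg_one {p k : ℕ} {m : ℤ} (hp : p.Prime) (hk : Odd k)
    (hpm : ¬(p : ℤ) ∣ m) : ∃ n : ℕ, Odd n ∧ J(p ^ k * m | n) = -1 := by
  obtain ⟨n, hn1, hpn⟩ :=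
    exists_modEq_one_jacobiSym_prime_eq_neg_one hp (mt Int.natCast_dvd.2 hpm)
  refine ⟨n, odd_of_modEq_one_four_mul hn1, ?_⟩
  rw [jacobiSym.mul_left, jacobiSym.pow_left, hpn, jacobiSym_eq_one_of_modEq_one hn1,
    hk.neg_one_pow, mul_one]

lemma exists_odd_jacobiSym_neg_sq_eq_neg_one {c : ℕ} (hc : c ≠ 0) :
    ∃ n : ℕ, Odd n ∧ J(-(c : ℤ) ^ 2 | n) = -1 := by
  have hpos : 0 < c ^ 2 := by positivity
  have hodd : Odd (4 * c ^ 2 - 1) := Nat.odd_iff.2 (by omega)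
  have hcop : (c : ℤ).gcd (4 * c ^ 2 - 1 : ℕ) = 1 := by
    rw [← Int.isCoprime_iff_gcd_eq_one, Nat.cast_sub (by omega)]
    exact ⟨4 * c, -1, by push_cast; ring⟩
  refine ⟨4 * c ^ 2 - 1, hodd, ?_⟩
  rw [jacobiSym_neg_sq hodd hcop, ZMod.χ₄_nat_three_mod_four (by omega)]

theorem exists_odd_jacobiSym_eq_neg_one {a : ℤ} (ha : ¬IsSquare a) :
    ∃ n : ℕ, Odd n ∧ J(a | n) = -1 := by
  by_cases habs : IsSquare a.natAbs
  · obtain ⟨c, hc⟩ := habs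
    have hneg : a = -(c : ℤ) ^ 2 := by
      rcases Int.natAbs_eq a with h | h <;> rw [hc] at h
      · exact absurd ⟨(c : ℤ), mod_cast h⟩ ha
      · rw [h, Nat.cast_mul, sq]
    have hc0 : c ≠ 0 := by
      rintro rfl
      exact ha (by simp [hneg])
    rw [hneg]
    exact exists_odd_jacobiSym_neg_sq_eq_neg_one hc0
  · obtain ⟨p, k, m, hp, hk, hpm, rfl⟩ := exists_eq_prime_pow_mul_of_not_isSquare_natAbs habs
    exact exists_odd_jacobiSym_prime_pow_mul_eq_neg_one hp hk hpm

lemma odd_val_unit_of_even {q : ℕ} (hq : Even q) (u : (ZMod q)ˣ) : Odd (u : ZMod q).val :=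
  Nat.coprime_two_right.1 ((ZMod.val_coe_unit_coprime u).coprime_dvd_right hq.two_dvd)

/-- The Dirichlet character modulo `4|a|` given by the Jacobi symbol `(a/·)`. It is specified on
units only, where the least nonnegative representative is odd; see `jacobiCharacter_natCast` for
its value at odd integers that need not be coprime to `a`. -/
noncomputable def jacobiCharacter (a : ℤ) : DirichletCharacter ℤ (4 * a.natAbs) :=
  MulChar.ofUnitHom <| MonoidHom.toHomUnits
    { toFun u := J(a | (u : ZMod (4 * a.natAbs)).val)
      map_one' := by
        rw [Units.val_one, ZMod.val_one'' (by omega), jacobiSym.one_right]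
      map_mul' u v := by
        have heven : Even (4 * a.natAbs) := (by decide : Even 4).mul_right _
        have hu := odd_val_unit_of_even heven u
        have hv := odd_val_unit_of_even heven v
        rw [Units.val_mul, ZMod.val_mul, ← jacobiSym.mod_right a (hu.mul hv),
          jacobiSym.mul_right' a hu.pos.ne' hv.pos.ne'] }

lemma jacobiCharacter_coe_unit (a : ℤ) (u : (ZMod (4 * a.natAbs))ˣ) :
    jacobiCharacter a u = J(a | (u : ZMod (4 * a.natAbs)).val) := by
  rw [jacobiCharacter, MulChar.ofUnitHom_coe, MonoidHom.coe_toHomUnits]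
  rfl

lemma jacobiCharacter_natCast (a : ℤ) {n : ℕ} (hn : Odd n) :
    jacobiCharacter a n = J(a | n) := by
  by_cases hcop : n.Coprime (4 * a.natAbs)
  · rw [← ZMod.coe_unitOfCoprime n hcop, jacobiCharacter_coe_unit, ZMod.coe_unitOfCoprime,
      ZMod.val_natCast, ← jacobiSym.mod_right a hn]
  · have hgcd : a.gcd n ≠ 1 := fun h ↦
      hcop ((hn.coprime_two_right.pow_right 2).mul_right (Nat.Coprime.symm h))
    rw [MulChar.map_nonunit _ (mt (ZMod.isUnit_iff_coprime n _).1 hcop),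
      jacobiSym.eq_zero_iff.2 ⟨hn.pos.ne', hgcd⟩]

theorem jacobiCharacter_eq_one_iff {a : ℤ} : jacobiCharacter a = 1 ↔ IsSquare a := by
  constructor
  · intro h
    by_contra ha
    obtain ⟨n, hn, hJ⟩ := exists_odd_jacobiSym_eq_neg_one ha
    rw [← jacobiCharacter_natCast a hn, h] at hJ
    by_cases hunit : IsUnit (n : ZMod (4 * a.natAbs))
    · rw [MulChar.one_apply hunit] at hJ
      contradiction
    · rw [MulChar.map_nonunit _ hunit] at hJ
      contradiction
  · rintro ⟨c, rfl⟩
    ext u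
    have hcop : c.gcd (u : ZMod (4 * (c * c).natAbs)).val = 1 :=
      ((ZMod.val_coe_unit_coprime u).coprime_dvd_right
        ⟨4 * c.natAbs, by rw [Int.natAbs_mul]; ring⟩).symm
    rw [jacobiCharacter_coe_unit, MulChar.one_apply_coe, jacobiSym.mul_left, ← sq,
      jacobiSym.sq_one hcop]

end

/-- For every nonzero integer `a` there are a modulus `q ≤ 4|a|` and a
Dirichlet character `χ` mod `q` such that the Jacobi symbol `(a/n)` equals
`χ(n)` for all odd positive integers `n`, and `χ` is nonprincipal iff `a`
is not a perfect square. -/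
theorem stmt_8 (a : ℤ) (ha : a ≠ 0) :
    ∃ q : ℕ, 0 < q ∧ (q : ℤ) ≤ 4 * |a| ∧
      ∃ χ : DirichletCharacter ℤ q,
        (∀ n : ℕ, Odd n → 0 < n → jacobiSym a n = χ (n : ZMod q)) ∧
        (χ ≠ 1 ↔ ¬IsSquare a) :=
  ⟨4 * a.natAbs, by positivity, by simp, jacobiCharacter a,
    fun _ hn _ ↦ (jacobiCharacter_natCast a hn).symm, jacobiCharacter_eq_one_iff.not⟩
end
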